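/- Theorem 3.5. Let (X,f) be an expansive homeomorphism of a compact metric space and let Φ = {log φ_n}_{n∈ℕ} be a subadditive potential on X with bounded distortion. Suppose η is a weakly mixing equilibrium state of Φ satisfying the lower subadditive Gibbs property. Then η has the K-property. -/

import Mathlib

/-!
The proof goes through Shannon entropy of finite partitions, with the convention that a partition
is a map `p : X → ι` to a finite type. Write `h` for the Kolmogorov-Sinai entropy of `f` and `e`
for an expansivity constant.

* The lower Gibbs bound, bounded distortion and the variational equality for `η` give a constant
  `c` and, for each `n ≥ 1`, a partition `α` whose cells stay `e`-close for times `0, …, n - 1`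
  and whose entropy satisfies `H(α) ≤ n h + c` (`exists_partition_entropy_le`). For `n = 1` this
  gives a generator `ξ`, and the σ-algebra `K` of its future generates the Borel sets
  (`iSup_futureAlg`).

* Let `W` be a partition measurable in the tail `⋂ f^{-n} K`. Its refinements are asymptotically
  determined by the remote future of `ξ` (`ExpSys.tail_approx`), so `W` has zero entropy
  (`ExpSys.zero_entropy`). Conditioning on a zero-entropy partition costs no entropy, so a
  quantitative form of the generator theorem (`ExpSys.generator`) yields `H(α | W) ≥ n h`
  (`ExpSys.mul_entropyKS_le`). The mutual information of `α` and `W` is therefore at most `c`,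
  uniformly in `n`.

* For `n = 2 * M + 1` with `M` large, expansivity makes `α` almost determine `W ∘ f^M`
  (`ExpSys.cH_fine`). As `W ∘ f^M` is again a tail partition, with the same entropy as `W`, the
  bound on mutual information becomes `H(W) ≤ c` for every tail partition `W`.

* If the tail contained a set `A` with `0 < η A < 1`, weak mixing would provide times `n_j` for
  which `f^{-n_j} {A, Aᶜ}` is nearly independent of the join of its predecessors, and these joins
  would be tail partitions of unbounded entropy (`trivial_of_bounded`). Hence the tail is trivial.
-/

open Filter MeasureTheory
open scoped ENNReal

namespace SubEq

variable {X : Type*}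

/-! ### Bowen balls, separated sets, topological pressure -/

/-- The Bowen ball `B_n(x,ε)` with respect to a distance function `ρ` and a map `f`. -/
def bowenBall (ρ : X → X → ℝ) (f : X → X) (n : ℕ) (ε : ℝ) (x : X) : Set X :=
  {y | ∀ k < n, ρ (f^[k] x) (f^[k] y) ≤ ε}

/-- `E` is `(n,ε)`-separated for `f` with respect to the distance `ρ`. -/
def IsSeparatedSet (ρ : X → X → ℝ) (f : X → X) (n : ℕ) (ε : ℝ) (E : Finset X) : Prop :=
  ∀ x ∈ E, ∀ y ∈ E, x ≠ y → ∃ k < n, ε ≤ ρ (f^[k] x) (f^[k] y)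

/-- The subadditive topological pressure
`P(Φ) = lim_{ε→0} limsup_n (1/n) log sup { Σ_{x∈E} φ_n x : E (n,ε)-separated }`;
since the inner quantity is monotone as `ε` decreases, the limit as `ε → 0` is the
supremum over `ε > 0`. -/
noncomputable def pressure (ρ : X → X → ℝ) (f : X → X) (φ : ℕ → X → ℝ) : ℝ :=
  sSup {p : ℝ | ∃ ε > (0:ℝ), p = atTop.limsup (fun n =>
    Real.log (sSup ((fun E : Finset X => ∑ x ∈ E, φ n x) ''
      {E : Finset X | IsSeparatedSet ρ f n ε E})) / n)}

/-- `Φ = {log φ_n}` is a subadditive potential on `(X,f)`: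
each `φ_n` is continuous and positive and
`log φ_{m+n} ≤ log φ_m + log φ_n ∘ f^m`. -/
def IsSubadditivePotential [TopologicalSpace X] (f : X → X) (φ : ℕ → X → ℝ) : Prop :=
  (∀ n, Continuous (φ n)) ∧ (∀ n x, 0 < φ n x) ∧
    ∀ m n, 1 ≤ m → 1 ≤ n → ∀ x : X,
      Real.log (φ (m + n) x) ≤ Real.log (φ m x) + Real.log (φ n (f^[m] x))

/-! ### Kolmogorov–Sinai entropy -/

/-- Static entropy `H_μ(ξ)` of the finite partition of `X` given by the fibers of
`p : X → ι`. -/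
noncomputable def partInfo [MeasurableSpace X] (μ : Measure X) {ι : Type} [Fintype ι]
    (p : X → ι) : ℝ :=
  ∑ i : ι, Real.negMulLog ((μ (p ⁻¹' {i})).toReal)

/-- The dynamical refinement `⋁_{k=0}^{n-1} f^{-k} ξ` of the partition given by `p`. -/
def refinePart (f : X → X) {ι : Type} (p : X → ι) (n : ℕ) : X → (Fin n → ι) :=
  fun x k => p (f^[(k : ℕ)] x)

/-- Entropy of `f` relative to the partition given by `p`; by subadditivity the limit
defining it equals the infimum. -/
noncomputable def entropyOfPart [MeasurableSpace X] (μ : Measure X) (f : X → X)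
    {ι : Type} [Fintype ι] (p : X → ι) : ℝ :=
  ⨅ n : ℕ, partInfo μ (refinePart f p (n + 1)) / (n + 1)

/-- The Kolmogorov–Sinai entropy `h_μ(f)`: the supremum over all finite measurable
partitions of the corresponding partition entropies. -/
noncomputable def entropyKS [MeasurableSpace X] (μ : Measure X) (f : X → X) : ℝ :=
  sSup {h : ℝ | ∃ (m : ℕ) (p : X → Fin m),
    (∀ i, MeasurableSet (p ⁻¹' {i})) ∧ h = entropyOfPart μ f p}

/-! ### Equilibrium states -/

/-- `μ` is an equilibrium state of the subadditive potential `Φ = {log φ_n}`: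
it is an `f`-invariant Borel probability measure with
`h_μ(f) + lim_n (1/n) ∫ log φ_n dμ = P(Φ)`. -/
def IsEqState [TopologicalSpace X] [MeasurableSpace X] (ρ : X → X → ℝ) (f : X → X)
    (φ : ℕ → X → ℝ) (μ : Measure X) : Prop :=
  IsProbabilityMeasure μ ∧ MeasurePreserving f μ μ ∧
    ∃ L : ℝ, Tendsto (fun n => (∫ x, Real.log (φ n x) ∂μ) / n) atTop (nhds L) ∧
      entropyKS μ f + L = pressure ρ f φ

/-- Bounded distortion: there is `C ≥ 1` such that for all sufficiently small `ε > 0`,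
all `x`, `n` and all `y,z ∈ B_n(x,ε)` one has `C⁻¹ ≤ φ_n(y)/φ_n(z) ≤ C`. -/
def HasBoundedDistortion (ρ : X → X → ℝ) (f : X → X) (φ : ℕ → X → ℝ) : Prop :=
  ∃ C : ℝ, 1 ≤ C ∧ ∃ ε₀ > (0:ℝ), ∀ ε, 0 < ε → ε ≤ ε₀ → ∀ (x : X) (n : ℕ),
    ∀ y ∈ bowenBall ρ f n ε x, ∀ z ∈ bowenBall ρ f n ε x,
      C⁻¹ ≤ φ n y / φ n z ∧ φ n y / φ n z ≤ C

/-- The lower subadditive Gibbs property: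
for every `ε > 0` there is `C ≥ 1` with `μ(B_n(x,ε)) ≥ C⁻¹ e^{-nP(Φ)} φ_n(x)`. -/
def HasLowerGibbs [TopologicalSpace X] [MeasurableSpace X] (ρ : X → X → ℝ) (f : X → X)
    (φ : ℕ → X → ℝ) (μ : Measure X) : Prop :=
  ∀ ε > (0:ℝ), ∃ C : ℝ, 1 ≤ C ∧ ∀ (x : X) (n : ℕ),
    ENNReal.ofReal (C⁻¹ * Real.exp (-(n : ℝ) * pressure ρ f φ) * φ n x)
      ≤ μ (bowenBall ρ f n ε x)

/-- Expansivity of an invertible map `f` with inverse `finv`. -/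
def IsExpansive (ρ : X → X → ℝ) (f finv : X → X) : Prop :=
  ∃ ε₀ > (0:ℝ), ∀ x y : X,
    (∀ n : ℕ, ρ (f^[n] x) (f^[n] y) ≤ ε₀ ∧ ρ (finv^[n] x) (finv^[n] y) ≤ ε₀) → x = y

/-! ### Mixing properties -/

/-- The Kolmogorov property of the invertible measure-preserving system `(X,μ,f)`
(`finv` is the inverse of `f`): there is a sub-σ-algebra `K` with `K ⊆ fK`,
`⋁_{n≥0} f^n K` the full σ-algebra, and `⋂_{n≥0} f^{-n} K` trivial mod `μ`. -/
def HasKProperty [m : MeasurableSpace X] (μ : Measure X) (f finv : X → X) : Prop :=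
  ∃ K : MeasurableSpace X, K ≤ m ∧ K ≤ K.map f ∧
    (⨆ n : ℕ, K.map (f^[n])) = m ∧
    ∀ A : Set X, MeasurableSet[⨅ n : ℕ, K.map (finv^[n])] A → μ A = 0 ∨ μ A = 1

/-- Mixing of a measure-preserving system. -/
def IsMixing [MeasurableSpace X] (μ : Measure X) (f : X → X) : Prop :=
  ∀ A B : Set X, MeasurableSet A → MeasurableSet B →
    Tendsto (fun n => μ ((f^[n]) ⁻¹' A ∩ B)) atTop (nhds (μ A * μ B))

/-- A set of natural numbers has upper density zero. -/
def UpperDensityZero (E : Set ℕ) : Prop :=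
  Tendsto (fun n => (Nat.card (E ∩ Set.Iio n : Set ℕ) : ℝ) / n) atTop (nhds 0)

/-- Weak mixing: for all measurable `A,B` there is a set `E ⊆ ℕ` of upper density zero
such that `μ(f^n A ∩ B) → μ(A)μ(B)` along `n ∉ E`. -/
def IsWeaklyMixing [MeasurableSpace X] (μ : Measure X) (f : X → X) : Prop :=
  ∀ A B : Set X, MeasurableSet A → MeasurableSet B →
    ∃ E : Set ℕ, UpperDensityZero E ∧
      Tendsto (fun n => μ ((f^[n]) ⁻¹' A ∩ B)) (atTop ⊓ Filter.principal Eᶜ)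
        (nhds (μ A * μ B))

/-- Total ergodicity: `f^n` is ergodic for every `n ≥ 1`. -/
def IsTotallyErgodic [MeasurableSpace X] (μ : Measure X) (f : X → X) : Prop :=
  ∀ n : ℕ, 1 ≤ n → Ergodic (f^[n]) μ

/-! ### Measure-theoretic isomorphism and the Bernoulli property -/

/-- Measure-theoretic isomorphism of the systems `(X,μ,f)` and `(Y,ν,g)`. -/
def IsMeasureIso {Y : Type*} [MeasurableSpace X] [MeasurableSpace Y]
    (μ : Measure X) (ν : Measure Y) (f : X → X) (g : Y → Y) : Prop :=
  ∃ Θ : X → Y, Measurable Θ ∧ Measure.map Θ μ = ν ∧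
    (∀ᵐ x ∂μ, Θ (f x) = g (Θ x)) ∧
    ∃ Ψ : Y → X, Measurable Ψ ∧ (∀ᵐ x ∂μ, Ψ (Θ x) = x) ∧ (∀ᵐ y ∂ν, Θ (Ψ y) = y)

/-- The left shift on a full shift space `ℤ → ι`. -/
def fullShift {ι : Type*} : (ℤ → ι) → (ℤ → ι) := fun x i => x (i + 1)

/-- `(X,μ,f)` is Bernoulli: it is measurably isomorphic to a Bernoulli shift, i.e. to a
two-sided full shift on a finite alphabet equipped with a product (i.i.d.) measure. -/
def IsBernoulli [MeasurableSpace X] (μ : Measure X) (f : X → X) : Prop :=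
  ∃ (m : ℕ) (p : Fin m → ℝ≥0∞), (∑ i : Fin m, p i) = 1 ∧
    ∃ ν : Measure (ℤ → Fin m),
      (∀ (s : Finset ℤ) (a : ℤ → Fin m),
        ν {x : ℤ → Fin m | ∀ i ∈ s, x i = a i} = ∏ i ∈ s, p (a i)) ∧
      IsMeasureIso μ ν f fullShift

/-! ### Shannon entropy of finite partitions -/

section Shannon

/-- Strong subadditivity for a single finite nonnegative array. -/
lemma array_submodular {ι κ : Type} [Fintype ι] [Fintype κ] (u : ι → κ → ℝ)
    (hu : ∀ i j, 0 ≤ u i j) :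
    Real.negMulLog (∑ i, ∑ j, u i j) + ∑ i, ∑ j, Real.negMulLog (u i j) ≤
      ∑ i, Real.negMulLog (∑ j, u i j) + ∑ j, Real.negMulLog (∑ i, u i j) := by
  set S := ∑ i, ∑ j, u i j with hS
  set r : ι → ℝ := fun i => ∑ j, u i j with hr
  set c : κ → ℝ := fun j => ∑ i, u i j with hc
  have hSc : S = ∑ j, c j := by rw [hS, Finset.sum_comm]
  have hr0 : ∀ i, 0 ≤ r i := fun i => Finset.sum_nonneg fun j _ => hu i j
  have hc0 : ∀ j, 0 ≤ c j := fun j => Finset.sum_nonneg fun i _ => hu i j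
  have hS0 : 0 ≤ S := Finset.sum_nonneg fun i _ => hr0 i
  have key : ∀ i j, u i j * (Real.log (r i) + Real.log (c j) - Real.log S - Real.log (u i j))
      ≤ r i * c j / S - u i j := by
    intro i j
    rcases (hu i j).eq_or_lt with h | h
    · rw [← h]; simp only [zero_mul, sub_zero]
      exact div_nonneg (mul_nonneg (hr0 i) (hc0 j)) hS0
    -- `log t ≤ t - 1` at `t = r i * c j / (S * u i j)`
    · have h1 : 0 < r i := h.trans_le
        (Finset.single_le_sum (f := fun j => u i j) (fun j _ => hu i j) (Finset.mem_univ j))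
      have h2 : 0 < c j := h.trans_le
        (Finset.single_le_sum (f := fun i => u i j) (fun i _ => hu i j) (Finset.mem_univ i))
      have h3 : 0 < S := h1.trans_le
        (Finset.single_le_sum (f := r) (fun i _ => hr0 i) (Finset.mem_univ i))
      have h4 := Real.log_le_sub_one_of_pos (x := r i * c j / (S * u i j)) (by positivity)
      rw [Real.log_div (by positivity) (by positivity), Real.log_mul h1.ne' h2.ne',
        Real.log_mul h3.ne' h.ne'] at h4
      calc _ = u i j * (Real.log (r i) + Real.log (c j) - (Real.log S + Real.log (u i j))) := by
            ring
        _ ≤ u i j * (r i * c j / (S * u i j) - 1) := by gcongr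
        _ = _ := by field_simp
  have hsum := Finset.sum_le_sum fun i (_ : i ∈ Finset.univ) =>
    Finset.sum_le_sum fun j (_ : j ∈ Finset.univ) => key i j
  have e1 : ∑ i, ∑ j, (r i * c j / S - u i j) = 0 := by
    simp only [Finset.sum_sub_distrib]
    have : ∑ i, ∑ j, r i * c j / S = S * S / S := by
      rw [show S * S / S = (∑ i, r i) * (∑ j, c j) / S by rw [← hSc], Finset.sum_mul_sum,
        Finset.sum_div]
      simp [Finset.sum_div]
    rw [this, mul_self_div_self, sub_self]
  have e2 : ∑ i, ∑ j, u i j *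
      (Real.log (r i) + Real.log (c j) - Real.log S - Real.log (u i j)) =
      ∑ i, r i * Real.log (r i) + ∑ j, c j * Real.log (c j) - S * Real.log S
        - ∑ i, ∑ j, u i j * Real.log (u i j) := by
    simp only [mul_sub, mul_add, Finset.sum_sub_distrib, Finset.sum_add_distrib]
    congr 3
    · simp only [hr, Finset.sum_mul]
    · rw [Finset.sum_comm]; simp only [hc, Finset.sum_mul]
    · simp only [hS, Finset.sum_mul, hr]
  rw [e1, e2] at hsum
  simp only [Real.negMulLog, neg_mul, Finset.sum_neg_distrib]
  linarith

lemma negMulLog_sum_le {κ : Type} (s : Finset κ) (a : κ → ℝ) (ha : ∀ j, 0 ≤ a j) :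
    Real.negMulLog (∑ j ∈ s, a j) ≤ ∑ j ∈ s, Real.negMulLog (a j) := by
  simp only [Real.negMulLog, neg_mul, Finset.sum_neg_distrib, Finset.sum_mul]
  apply neg_le_neg
  refine Finset.sum_le_sum fun j hj => ?_
  rcases (ha j).eq_or_lt with h | h
  · simp [← h]
  · have := Finset.single_le_sum (f := a) (fun j _ => ha j) hj
    gcongr

/-- All unions of fibres of `p` belong to the σ-algebra `m`. -/
def FM (m : MeasurableSpace X) {ι : Type} (p : X → ι) : Prop :=
  ∀ s : Set ι, MeasurableSet[m] (Set.preimage p s)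

/-- The join of two partitions. -/
def pr {ι κ : Type} (p : X → ι) (q : X → κ) : X → ι × κ := fun x => (p x, q x)

lemma FM.pr {m : MeasurableSpace X} {ι κ : Type} [Finite ι] [Finite κ] {p : X → ι} {q : X → κ}
    (hp : FM m p) (hq : FM m q) : FM m (pr p q) := by
  intro s
  have : SubEq.pr p q ⁻¹' s = ⋃ a ∈ s, (p ⁻¹' {a.1} ∩ q ⁻¹' {a.2}) := by
    ext x; simp [SubEq.pr]
  rw [this]
  exact MeasurableSet.biUnion (Set.to_countable s) fun a _ => (hp _).inter (hq _)

lemma FM.of_factor {m : MeasurableSpace X} {ι κ : Type} {p : X → ι} {q : X → κ}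
    (hq : FM m q) (h : ∀ x y, q x = q y → p x = p y) : FM m p := by
  intro s
  have : p ⁻¹' s = q ⁻¹' (q '' (p ⁻¹' s)) := by
    ext x; constructor
    · intro hx; exact ⟨x, hx, rfl⟩
    · rintro ⟨y, hy, hxy⟩
      have := h y x hxy
      simp only [Set.mem_preimage] at hy ⊢
      rwa [← this]
  rw [this]; exact hq _

lemma FM.pi {m : MeasurableSpace X} {ι : Type} [Finite ι] {N : ℕ} {p : X → (Fin N → ι)}
    (hp : ∀ i, FM m (fun x => p x i)) : FM m p := by
  intro s
  have : p ⁻¹' s = ⋃ a ∈ s, ⋂ i, ((fun x => p x i) ⁻¹' {a i}) := by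
    ext x; simp [← funext_iff]
  rw [this]
  exact MeasurableSet.biUnion (Set.to_countable s) fun a _ => MeasurableSet.iInter fun i => hp i _

lemma FM.of_fibres {m : MeasurableSpace X} {ι : Type} [Finite ι] {p : X → ι}
    (hp : ∀ i, MeasurableSet[m] (p ⁻¹' {i})) : FM m p := by
  intro s
  rw [← Set.biUnion_of_singleton s, Set.preimage_iUnion₂]
  exact MeasurableSet.biUnion (Set.to_countable s) fun a _ => hp a

lemma FM.mono {m m' : MeasurableSpace X} (h : m ≤ m') {ι : Type} {p : X → ι}
    (hp : FM m p) : FM m' p := fun s => h _ (hp s)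

lemma FM.mem {m : MeasurableSpace X} {B : Set X} (hB : MeasurableSet[m] B) :
    FM m (fun x => x ∈ B) := by
  refine FM.of_fibres fun i => ?_
  by_cases hi : i
  · have : (fun x => x ∈ B) ⁻¹' {i} = B := by ext x; simp [hi]
    rw [this]; exact hB
  · have : (fun x => x ∈ B) ⁻¹' {i} = Bᶜ := by ext x; simp [hi]
    rw [this]; exact hB.compl

lemma FM.comp [m0 : MeasurableSpace X] {ι : Type} {p : X → ι} {f : X → X} (hf : Measurable f)
    (hp : FM m0 p) : FM m0 (p ∘ f) :=
  fun s => hf (hp s)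

variable [m0 : MeasurableSpace X] {μ : Measure X}
variable {ι κ τ : Type} [Fintype ι] [Fintype κ] [Fintype τ]
  {p : X → ι} {q : X → κ} {r : X → τ}

/-- The conditional entropy `H(p | q) = H(p ∨ q) - H(q)`. -/
noncomputable def cH (μ : Measure X) {ι κ : Type} [Fintype ι] [Fintype κ]
    (p : X → ι) (q : X → κ) : ℝ :=
  partInfo μ (pr p q) - partInfo μ q

lemma partInfo_eq (p : X → ι) : partInfo μ p = ∑ i, Real.negMulLog (μ.real (p ⁻¹' {i})) := rfl

variable [IsProbabilityMeasure μ]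

lemma partInfo_nonneg (p : X → ι) : 0 ≤ partInfo μ p :=
  Finset.sum_nonneg fun _ _ => Real.negMulLog_nonneg ENNReal.toReal_nonneg measureReal_le_one

omit [Fintype ι] in
lemma real_factor [DecidableEq ι] (hq : FM m0 q) (F : κ → ι) (i : ι) :
    μ.real ((F ∘ q) ⁻¹' {i}) = ∑ j with F j = i, μ.real (q ⁻¹' {j}) := by
  rw [← measureReal_biUnion_finset]
  · congr 1; ext x; simp
  · intro a _ b _ hab
    exact Disjoint.preimage _ (by simpa using hab)
  · intro b _; exact hq _

/-- A coarser partition has smaller entropy. -/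
lemma partInfo_mono (hq : FM m0 q) (h : ∀ x y, q x = q y → p x = p y) :
    partInfo μ p ≤ partInfo μ q := by
  classical
  have : Nonempty X := μ.nonempty_of_neZero
  have : Nonempty ι := this.map p
  obtain ⟨F, hF⟩ : ∃ F : κ → ι, p = F ∘ q :=
    ⟨_, ((Function.factorsThrough_iff p).1 fun x y hxy => h x y hxy).choose_spec⟩
  rw [hF, partInfo_eq, partInfo_eq,
    ← Finset.sum_fiberwise Finset.univ F fun j => Real.negMulLog (μ.real (q ⁻¹' {j}))]
  refine Finset.sum_le_sum fun i _ => ?_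
  rw [real_factor hq]
  exact negMulLog_sum_le _ _ fun _ => measureReal_nonneg

lemma partInfo_congr (hp : FM m0 p) (hq : FM m0 q) (h : ∀ x y, q x = q y ↔ p x = p y) :
    partInfo μ p = partInfo μ q :=
  le_antisymm (partInfo_mono hq fun x y => (h x y).1) (partInfo_mono hp fun x y => (h x y).2)

/-- Strong subadditivity of Shannon entropy. -/
lemma partInfo_submodular (hp : FM m0 p) (hq : FM m0 q) (hr : FM m0 r) :
    partInfo μ (pr p (pr q r)) + partInfo μ r ≤ partInfo μ (pr p r) + partInfo μ (pr q r) := by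
  classical
  set w : ι → κ → τ → ℝ := fun i j k => μ.real (pr p (pr q r) ⁻¹' {(i, j, k)}) with hw
  have hm : FM m0 (pr p (pr q r)) := hp.pr (hq.pr hr)
  have e1 : ∀ k, μ.real (r ⁻¹' {k}) = ∑ i, ∑ j, w i j k := by
    intro k
    have := real_factor (μ := μ) hm (fun a => a.2.2) k
    rw [show (fun a : ι × κ × τ => a.2.2) ∘ pr p (pr q r) = r from rfl] at this
    rw [this, Finset.sum_filter, Fintype.sum_prod_type]
    refine Finset.sum_congr rfl fun i _ => ?_
    rw [Fintype.sum_prod_type]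
    refine Finset.sum_congr rfl fun j _ => ?_
    simp [hw]
  have e2 : ∀ i k, μ.real (pr p r ⁻¹' {(i, k)}) = ∑ j, w i j k := by
    intro i k
    have := real_factor (μ := μ) hm (fun a => (a.1, a.2.2)) (i, k)
    rw [show (fun a : ι × κ × τ => (a.1, a.2.2)) ∘ pr p (pr q r) = pr p r from rfl] at this
    rw [this, Finset.sum_filter, Fintype.sum_prod_type, Finset.sum_eq_single i]
    · rw [Fintype.sum_prod_type]
      refine Finset.sum_congr rfl fun j _ => ?_
      simp [hw]
    · intro b _ hb; simp [hb]
    · simp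
  have e3 : ∀ j k, μ.real (pr q r ⁻¹' {(j, k)}) = ∑ i, w i j k := by
    intro j k
    have := real_factor (μ := μ) hm (fun a => a.2) (j, k)
    rw [show (fun a : ι × κ × τ => a.2) ∘ pr p (pr q r) = pr q r from rfl] at this
    rw [this, Finset.sum_filter, Fintype.sum_prod_type]
    refine Finset.sum_congr rfl fun i _ => ?_
    simp [hw]
  have key := Finset.sum_le_sum fun k (_ : k ∈ Finset.univ) =>
    array_submodular (fun i j => w i j k) fun i j => measureReal_nonneg
  simp only [Finset.sum_add_distrib] at key
  have f1 : partInfo μ r = ∑ k, Real.negMulLog (∑ i, ∑ j, w i j k) := by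
    simp only [partInfo_eq, e1]
  have f2 : partInfo μ (pr p r) = ∑ k, ∑ i, Real.negMulLog (∑ j, w i j k) := by
    rw [partInfo_eq, Fintype.sum_prod_type, Finset.sum_comm]; simp only [e2]
  have f3 : partInfo μ (pr q r) = ∑ k, ∑ j, Real.negMulLog (∑ i, w i j k) := by
    rw [partInfo_eq, Fintype.sum_prod_type, Finset.sum_comm]; simp only [e3]
  have f4 : partInfo μ (pr p (pr q r)) = ∑ k, ∑ i, ∑ j, Real.negMulLog (w i j k) := by
    rw [partInfo_eq, Fintype.sum_prod_type, Finset.sum_comm]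
    rw [Finset.sum_comm]
    rw [Finset.sum_comm (s := (Finset.univ : Finset τ))]
    refine Finset.sum_congr rfl fun i _ => ?_
    rw [Fintype.sum_prod_type, Finset.sum_comm]
  rw [f1, f2, f3, f4]; linarith

lemma cH_nonneg (hp : FM m0 p) (hq : FM m0 q) : 0 ≤ cH μ p q :=
  sub_nonneg.2 (partInfo_mono (hp.pr hq) fun _ _ h => (Prod.ext_iff.1 h).2)

lemma cH_mono_left (hr : FM m0 r) (hq : FM m0 q)
    (h : ∀ x y, r x = r y → q x = q y → p x = p y) : cH μ p q ≤ cH μ r q := by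
  have := partInfo_mono (μ := μ) (p := pr p q) (hr.pr hq) fun x y hxy => by
    simp only [pr, Prod.mk.injEq] at hxy ⊢
    exact ⟨h x y hxy.1 hxy.2, hxy.2⟩
  unfold cH; linarith

lemma cH_mono_right (hp : FM m0 p) (hq : FM m0 q) (hr : FM m0 r)
    (h : ∀ x y, q x = q y → r x = r y) : cH μ p q ≤ cH μ p r := by
  have h1 := partInfo_submodular (μ := μ) hp hq hr
  have h2 : partInfo μ (pr q r) = partInfo μ q :=
    partInfo_congr (hq.pr hr) hq fun x y => by
      simp only [pr, Prod.mk.injEq]; exact ⟨fun hh => ⟨hh, h x y hh⟩, fun hh => hh.1⟩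
  have h3 : partInfo μ (pr p (pr q r)) = partInfo μ (pr p q) :=
    partInfo_congr (hp.pr (hq.pr hr)) (hp.pr hq) fun x y => by
      simp only [pr, Prod.mk.injEq]
      exact ⟨fun hh => ⟨hh.1, hh.2, h x y hh.2⟩, fun hh => ⟨hh.1, hh.2.1⟩⟩
  unfold cH; linarith

lemma cH_pr_le (hp : FM m0 p) (hq : FM m0 q) (hr : FM m0 r) :
    cH μ (pr p q) r ≤ cH μ p r + cH μ q r := by
  have h1 := partInfo_submodular (μ := μ) hp hq hr
  have h3 : partInfo μ (pr p (pr q r)) = partInfo μ (pr (pr p q) r) :=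
    partInfo_congr (hp.pr (hq.pr hr)) ((hp.pr hq).pr hr) fun x y => by
      simp only [pr, Prod.mk.injEq, and_assoc]
  unfold cH; linarith

lemma cH_le (hp : FM m0 p) (hq : FM m0 q) : cH μ p q ≤ partInfo μ p := by
  have hu : FM m0 (fun _ : X => ()) := fun s => by
    by_cases h : () ∈ s <;> simp [h]
  have h1 := cH_mono_right (μ := μ) hp hq hu fun _ _ _ => rfl
  have h2 : partInfo μ (pr p fun _ : X => ()) = partInfo μ p :=
    partInfo_congr (hp.pr hu) hp fun _ _ => by simp [pr]
  have h3 := partInfo_nonneg (μ := μ) (fun _ : X => ())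
  unfold cH at *; linarith

lemma partInfo_pr_le (hp : FM m0 p) (hq : FM m0 q) :
    partInfo μ (pr p q) ≤ partInfo μ p + partInfo μ q := by
  have := cH_le (μ := μ) hp hq
  unfold cH at this; linarith

lemma partInfo_le_add_cH (hp : FM m0 p) (hq : FM m0 q) :
    partInfo μ p ≤ partInfo μ q + cH μ p q := by
  have := partInfo_mono (μ := μ) (p := p) (hp.pr hq) fun x y h => (Prod.ext_iff.1 h).1
  unfold cH; linarith

lemma cH_pi_le {N : ℕ} {P : X → (Fin N → ι)} (hP : ∀ i, FM m0 (fun x => P x i)) (hq : FM m0 q) :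
    cH μ P q ≤ ∑ i, cH μ (fun x => P x i) q := by
  induction N with
  | zero =>
    have : partInfo μ (pr P q) ≤ partInfo μ q := partInfo_mono hq fun x y h => by
      simp only [pr, Prod.mk.injEq]; exact ⟨Subsingleton.elim _ _, h⟩
    simp only [cH, Finset.univ_eq_empty, Finset.sum_empty]; linarith
  | succ N ih =>
    have h1 : FM m0 (fun x => fun i : Fin N => P x i.castSucc) := FM.pi fun i => hP i.castSucc
    have h2 := cH_mono_left (μ := μ) (p := P) (h1.pr (hP (Fin.last N))) hq
      fun x y hxy _ => by
        simp only [pr, Prod.mk.injEq] at hxy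
        funext i
        refine Fin.lastCases hxy.2 (fun i => ?_) i
        exact congrFun hxy.1 i
    have h3 := cH_pr_le (μ := μ) h1 (hP (Fin.last N)) hq
    have h4 := ih (P := fun x => fun i : Fin N => P x i.castSucc) fun i => hP i.castSucc
    rw [Fin.sum_univ_castSucc]
    linarith

omit [IsProbabilityMeasure μ] in
lemma partInfo_comp {f : X → X} (hf : MeasurePreserving f μ μ) (hp : FM m0 p) :
    partInfo μ (p ∘ f) = partInfo μ p := by
  simp only [partInfo_eq, Set.preimage_comp]
  refine Finset.sum_congr rfl fun i _ => ?_
  rw [hf.measureReal_preimage (hp _).nullMeasurableSet]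

omit [IsProbabilityMeasure μ] in
lemma cH_comp {f : X → X} (hf : MeasurePreserving f μ μ) (hp : FM m0 p) (hq : FM m0 q) :
    cH μ (p ∘ f) (q ∘ f) = cH μ p q := by
  unfold cH
  rw [partInfo_comp hf hq, ← partInfo_comp hf (hp.pr hq)]; rfl

lemma partInfo_mem {B : Set X} (hB : MeasurableSet B) :
    partInfo μ (fun x => x ∈ B) =
      Real.negMulLog (μ.real B) + Real.negMulLog (1 - μ.real B) := by
  rw [partInfo_eq, Fintype.univ_Prop, Finset.sum_pair (by simp)]
  congr 2
  · congr 1; ext x; simp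
  · rw [← probReal_compl_eq_one_sub hB]; congr 1; ext x; simp

/-- If every cell of `β` is close in measure to a union of cells of `q`, then `H(β | q)` is
small. -/
lemma cH_small (ι : Type) [Fintype ι] (δ : ℝ) (hδ : 0 < δ) :
    ∃ δ' > 0, ∀ (β : X → ι) (_ : FM m0 β) (κ : Type) (_ : Fintype κ) (q : X → κ) (_ : FM m0 q),
      (∀ i, ∃ S : Set κ, μ.real (symmDiff (β ⁻¹' {i}) (q ⁻¹' S)) ≤ δ') → cH μ β q ≤ δ := by
  set N := Fintype.card ι
  have hcont : Continuous fun t : ℝ => Real.negMulLog t + Real.negMulLog (1 - t) :=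
    Real.continuous_negMulLog.add (Real.continuous_negMulLog.comp (by fun_prop))
  have h0 : (fun t : ℝ => Real.negMulLog t + Real.negMulLog (1 - t)) 0 = 0 := by simp
  have hN : 0 < δ / (N + 1) := by positivity
  obtain ⟨e, he, hh⟩ := Metric.continuousAt_iff.1 (hcont.continuousAt (x := 0)) _ hN
  refine ⟨e / 2, by positivity, fun β hβ κ _ q hq hS => ?_⟩
  let eq := Fintype.equivFin ι
  -- `β` is the join of the two-set partitions `{B, Bᶜ}` given by its cells `B`, and
  -- `H({B, Bᶜ} | q) ≤ H({D, Dᶜ})` for the symmetric difference `D` of `B` and a union of cells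
  let P : X → (Fin N → Prop) := fun x i => x ∈ β ⁻¹' {eq.symm i}
  have hP : ∀ i, FM m0 fun x => P x i := fun i => FM.mem (hβ _)
  have h1 : cH μ β q ≤ cH μ P q := cH_mono_left (FM.pi hP) hq fun x y hxy _ => by
    have := congrFun hxy (eq (β x))
    simp only [P, Set.mem_preimage, Set.mem_singleton_iff, Equiv.symm_apply_apply, eq_iff_iff,
      true_iff] at this
    exact this.symm
  have h2 : ∀ i, cH μ (fun x => P x i) q ≤ δ / (N + 1) := by
    intro i
    obtain ⟨S, hS⟩ := hS (eq.symm i)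
    set B := β ⁻¹' {eq.symm i}
    have hBm : MeasurableSet B := hβ _
    set D := symmDiff B (q ⁻¹' S) with hD
    have hDm : MeasurableSet D := hBm.symmDiff (hq S)
    have a1 : cH μ (fun x => x ∈ B) q ≤ cH μ (fun x => x ∈ D) q :=
      cH_mono_left (FM.mem hDm) hq fun x y h1 h2 => by
        simp only [hD, Set.mem_symmDiff, Set.mem_preimage, h2] at h1
        simp only [eq_iff_iff] at h1 ⊢; tauto
    have a2 := cH_le (μ := μ) (FM.mem hDm) hq
    rw [partInfo_mem hDm] at a2
    have a3 := @hh (μ.real D) (by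
      rw [Real.dist_eq, sub_zero, abs_of_nonneg measureReal_nonneg]; linarith)
    beta_reduce at h0
    rw [h0, Real.dist_eq, sub_zero] at a3
    have a4 := le_abs_self (Real.negMulLog (μ.real D) + Real.negMulLog (1 - μ.real D))
    change cH μ (fun x => x ∈ B) q ≤ _
    linarith
  have h3 := cH_pi_le (μ := μ) hP hq
  have h4 := Finset.sum_le_sum fun i (_ : i ∈ Finset.univ) => h2 i
  simp only [Finset.sum_const, Finset.card_univ, Fintype.card_fin, nsmul_eq_mul] at h4
  have h5 : (N : ℝ) * (δ / (N + 1)) ≤ δ := by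
    rw [mul_div_assoc', div_le_iff₀ (by positivity)]; nlinarith
  linarith

end Shannon

/-! ### Expansive systems: generators and conditional entropy -/

section Dynamics

/-- An expansive homeomorphism `f` with inverse `finv` and expansivity constant `e`, together
with an invariant measure `η`. -/
structure ExpSys [MetricSpace X] [MeasurableSpace X] (f finv : X → X) (η : Measure X)
    (e : ℝ) : Prop where
  cf : Continuous f
  cfinv : Continuous finv
  left : Function.LeftInverse finv f
  right : Function.RightInverse finv f
  exp : ∀ x y : X,
    (∀ n : ℕ, dist (f^[n] x) (f^[n] y) ≤ e ∧ dist (finv^[n] x) (finv^[n] y) ≤ e) → x = y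
  mp : MeasurePreserving f η η

/-- Points in the same cell of `q` stay `e`-close during the times `0, …, N - 1`. -/
def CB [MetricSpace X] (f : X → X) (e : ℝ) (N : ℕ) {κ : Type} (q : X → κ) : Prop :=
  ∀ x y, q x = q y → ∀ t < N, dist (f^[t] x) (f^[t] y) ≤ e

/-- Points in the same cell of `q` stay `e`-close during the times `-M, …, M`. -/
def Fine [MetricSpace X] (f finv : X → X) (e : ℝ) (M : ℕ) {κ : Type} (q : X → κ) : Prop :=
  ∀ x y, q x = q y → ∀ j ≤ M, dist (f^[j] x) (f^[j] y) ≤ e ∧ dist (finv^[j] x) (finv^[j] y) ≤ e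

lemma refinePart_eq_iff {f : X → X} {ι : Type} {p : X → ι} {N : ℕ} {x y : X} :
    refinePart f p N x = refinePart f p N y ↔ ∀ t < N, p (f^[t] x) = p (f^[t] y) := by
  constructor
  · intro h t ht; exact congrFun h ⟨t, ht⟩
  · intro h; funext i; exact h i i.2

variable [MetricSpace X] [MeasurableSpace X] {f finv : X → X} {η : Measure X} {e : ℝ}
variable {ι κ τ : Type} [Fintype ι] [Fintype κ] [Fintype τ]

omit [MetricSpace X] [Fintype ι] in
lemma FM.refine [Finite ι] {g : X → X} (hg : Measurable g) {p : X → ι} (hp : FM ‹_› p) (N : ℕ) :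
    FM ‹_› (refinePart g p N) :=
  FM.pi fun i => hp.comp (hg.iterate i)

omit [MeasurableSpace X] [Fintype κ] in
lemma Fine.mono {M M' : ℕ} (h : M ≤ M') {q : X → κ} (hq : Fine f finv e M' q) :
    Fine f finv e M q := fun x y hxy j hj => hq x y hxy j (hj.trans h)

namespace ExpSys

lemma iter_right (h : ExpSys f finv η e) (n : ℕ) (x : X) : f^[n] (finv^[n] x) = x :=
  h.right.iterate n x

lemma iter_left (h : ExpSys f finv η e) (n : ℕ) (x : X) : finv^[n] (f^[n] x) = x :=
  h.left.iterate n x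

lemma f_shift (h : ExpSys f finv η e) (s j : ℕ) (x : X) :
    f^[s + j] (finv^[s] x) = f^[j] x := by
  rw [add_comm, Function.iterate_add_apply, h.iter_right]

lemma finv_shift (h : ExpSys f finv η e) {s j : ℕ} (hj : j ≤ s) (x : X) :
    f^[s - j] (finv^[s] x) = finv^[j] x := by
  obtain ⟨t, rfl⟩ := Nat.exists_eq_add_of_le' hj
  rw [Nat.add_sub_cancel, Function.iterate_add_apply, h.iter_right]

omit [Fintype κ] in
lemma fine (h : ExpSys f finv η e) {N s M : ℕ} {q : X → κ} (hq : CB f e N q) (h1 : M ≤ s)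
    (h2 : s + M < N) : Fine f finv e M (q ∘ finv^[s]) := by
  intro x y hxy j hj
  have := hq _ _ hxy
  constructor
  · have := this (s + j) (by omega)
    rwa [h.f_shift, h.f_shift] at this
  · have := this (s - j) (by omega)
    rwa [h.finv_shift (by omega), h.finv_shift (by omega)] at this

variable [BorelSpace X]

lemma mf (h : ExpSys f finv η e) : Measurable f := h.cf.measurable

lemma mfinv (h : ExpSys f finv η e) : Measurable finv := h.cfinv.measurable

lemma mp_inv (h : ExpSys f finv η e) : MeasurePreserving finv η η := by
  refine ⟨h.mfinv, ?_⟩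
  conv_lhs => rw [← h.mp.map_eq]
  rw [Measure.map_map h.mfinv h.mf, h.left.comp_eq_id, Measure.map_id]

variable [CompactSpace X] [IsProbabilityMeasure η]

/-- A measurable set is approximated by unions of cells of any partition whose cells stay
`e`-close for a long enough time in the past and the future. -/
lemma approx_fine (h : ExpSys f finv η e) {B : Set X} (hB : MeasurableSet B) {δ : ℝ}
    (hδ : 0 < δ) : ∃ M, ∀ (κ : Type) (q : X → κ), Fine f finv e M q →
      ∃ S : Set κ, η.real (symmDiff B (q ⁻¹' S)) ≤ δ := by
  have hδ' : ENNReal.ofReal (δ / 2) ≠ 0 := by simpa using hδ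
  -- Two disjoint compact sets fill most of `B` and `Bᶜ`; by expansivity and compactness no pair of
  -- points in `F₁ ×ˢ F₂` stays `e`-close during the times `-M, …, M` once `M` is large.
  obtain ⟨F₁, hF₁, hc₁, hm₁⟩ := hB.exists_isCompact_sdiff_lt (measure_ne_top η B) hδ'
  obtain ⟨F₂, hF₂, hc₂, hm₂⟩ := hB.compl.exists_isCompact_sdiff_lt (measure_ne_top η Bᶜ) hδ'
  let Z : ℕ → Set (X × X) := fun M => (F₁ ×ˢ F₂) ∩ {z | ∀ j ≤ M,
    dist (f^[j] z.1) (f^[j] z.2) ≤ e ∧ dist (finv^[j] z.1) (finv^[j] z.2) ≤ e}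
  have hcl : ∀ M, IsClosed (Z M) := by
    intro M
    refine (hc₁.prod hc₂).isClosed.inter ?_
    simp only [Set.ofPred_forall]
    refine isClosed_iInter fun j => isClosed_iInter fun _ => ?_
    have c1 := h.cf.iterate j
    have c2 := h.cfinv.iterate j
    have d1 : Continuous fun z : X × X => dist (f^[j] z.1) (f^[j] z.2) :=
      (c1.comp continuous_fst).dist (c1.comp continuous_snd)
    have d2 : Continuous fun z : X × X => dist (finv^[j] z.1) (finv^[j] z.2) :=
      (c2.comp continuous_fst).dist (c2.comp continuous_snd)
    exact (isClosed_le d1 continuous_const).inter (isClosed_le d2 continuous_const)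
  have hex : ∃ M, Z M = ∅ := by
    by_contra hne
    push Not at hne
    obtain ⟨z, hz⟩ := IsCompact.nonempty_iInter_of_sequence_nonempty_isCompact_isClosed Z
      (fun M z hz => ⟨hz.1, fun j hj => hz.2 j (by omega)⟩)
      (fun M => hne M) ((hcl 0).isCompact) hcl
    simp only [Set.mem_iInter] at hz
    have : z.1 = z.2 := h.exp _ _ fun n => (hz n).2 n le_rfl
    exact hF₂ (hz 0).1.2 (this ▸ hF₁ (hz 0).1.1)
  obtain ⟨M, hM⟩ := hex
  refine ⟨M, fun κ q hq => ⟨q '' F₁, ?_⟩⟩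
  have hsub : symmDiff B (q ⁻¹' (q '' F₁)) ⊆ (B \ F₁) ∪ (Bᶜ \ F₂) := by
    rintro x (⟨hx, hx'⟩ | ⟨⟨y, hy, hyx⟩, hx'⟩)
    · exact Or.inl ⟨hx, fun hF => hx' ⟨x, hF, rfl⟩⟩
    · refine Or.inr ⟨hx', fun hF => ?_⟩
      have : (y, x) ∈ Z M := ⟨⟨hy, hF⟩, hq y x hyx⟩
      rw [hM] at this; exact this
  have h1 : η (symmDiff B (q ⁻¹' (q '' F₁))) ≤ ENNReal.ofReal δ := by
    calc _ ≤ η (B \ F₁) + η (Bᶜ \ F₂) := (measure_mono hsub).trans (measure_union_le _ _)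
      _ ≤ ENNReal.ofReal (δ / 2) + ENNReal.ofReal (δ / 2) := add_le_add hm₁.le hm₂.le
      _ = _ := by rw [← ENNReal.ofReal_add (by positivity) (by positivity), add_halves]
  exact ENNReal.toReal_le_of_le_ofReal hδ.le h1

/-- Any partition is almost determined by every partition whose cells stay `e`-close for a long
enough time in the past and the future. -/
lemma cH_fine (h : ExpSys f finv η e) {β : X → ι} (hβ : FM ‹_› β) {δ : ℝ} (hδ : 0 < δ) :
    ∃ M, ∀ (κ : Type) (_ : Fintype κ) (q : X → κ), FM ‹_› q → Fine f finv e M q →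
      cH η β q ≤ δ := by
  obtain ⟨δ', hδ', hsm⟩ := cH_small (X := X) (μ := η) ι δ hδ
  choose M hM using fun i => h.approx_fine (hβ {i}) hδ'
  refine ⟨Finset.univ.sup M, fun κ _ q hq hfine => hsm β hβ κ _ q hq fun i => ?_⟩
  exact hM i κ q (hfine.mono (Finset.le_sup (Finset.mem_univ i)))

end ExpSys

omit [MeasurableSpace X] [Fintype κ] in
lemma CB.refine {n : ℕ} (hn : 1 ≤ n) {α : X → κ} (hα : CB f e n α) (k : ℕ) :
    CB f e (n * k) (refinePart f^[n] α k) := by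
  intro x y hxy t ht
  rw [refinePart_eq_iff] at hxy
  have h1 := hα _ _ (hxy (t / n) (Nat.div_lt_of_lt_mul ht)) (t % n) (Nat.mod_lt _ hn)
  rw [← Function.iterate_mul, ← Function.iterate_add_apply, ← Function.iterate_add_apply,
    Nat.mod_add_div] at h1
  exact h1

variable [BorelSpace X] [CompactSpace X] [IsProbabilityMeasure η]

/-- Quantitative Kolmogorov–Sinai generator theorem: the entropy of a long refinement of `β`
under `f` is controlled by refinements under `f^n` of any partition `α` whose cells are
`e`-close for times `0, …, n - 1`; the number `M` of extra times is independent of `n`, `α`. -/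
lemma ExpSys.generator (h : ExpSys f finv η e) {β : X → ι} (hβ : FM ‹_› β) {δ : ℝ}
    (hδ : 0 < δ) :
    ∃ M : ℕ, ∀ n, 1 ≤ n → ∀ (κ : Type) (_ : Fintype κ) (α : X → κ), FM ‹_› α → CB f e n α →
      ∀ k, partInfo η (refinePart f β (n * k)) ≤
        partInfo η (refinePart f^[n] α (k + 2 * M)) + (n * k : ℕ) * δ := by
  obtain ⟨M, hM⟩ := h.cH_fine hβ hδ
  refine ⟨M, fun n hn κ _ α hα hCB k => ?_⟩
  set R := refinePart f^[n] α (k + 2 * M) with hR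
  have hRm : FM ‹_› R := hα.refine (h.mf.iterate n) _
  set Q := R ∘ finv^[n * M] with hQ
  have hQm : FM ‹_› Q := hRm.comp (h.mfinv.iterate _)
  have hRC : CB f e (n * (k + 2 * M)) R := hCB.refine hn _
  have hMn : M ≤ n * M := Nat.le_mul_of_pos_left M hn
  have h1 : cH η (refinePart f β (n * k)) Q ≤ ∑ _i : Fin (n * k), δ := by
    refine (cH_pi_le (fun i => hβ.comp (h.mf.iterate i)) hQm).trans
      (Finset.sum_le_sum fun i _ => ?_)
    have e1 : Q = (R ∘ finv^[n * M + i]) ∘ f^[i] := by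
      funext x
      simp only [hQ, Function.comp_apply, Function.iterate_add_apply, h.iter_left]
    change cH η (β ∘ f^[i]) Q ≤ δ
    rw [e1, cH_comp (h.mp.iterate i) hβ (hRm.comp (h.mfinv.iterate _))]
    refine hM _ _ _ (hRm.comp (h.mfinv.iterate _)) (h.fine hRC (by omega) ?_)
    have := i.2
    have : n * (k + 2 * M) = n * k + n * M + n * M := by ring
    omega
  have h2 := partInfo_le_add_cH (μ := η) (hβ.refine h.mf (n * k)) hQm
  rw [hQ, partInfo_comp (h.mp_inv.iterate _) hRm, ← hQ] at h2
  simp only [Finset.sum_const, Finset.card_univ, Fintype.card_fin, nsmul_eq_mul] at h1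
  linarith

omit [MetricSpace X] [BorelSpace X] [CompactSpace X] in
lemma refine_add_le (hf : MeasurePreserving f η η) {p : X → ι} (hp : FM ‹_› p) (a b : ℕ) :
    partInfo η (refinePart f p (a + b)) ≤
      partInfo η (refinePart f p a) + partInfo η (refinePart f p b) := by
  have hb := hp.refine hf.measurable b
  have h1 := partInfo_pr_le (μ := η) (hp.refine hf.measurable a) (hb.comp (hf.measurable.iterate a))
  rw [partInfo_comp (hf.iterate a) hb] at h1
  refine (partInfo_mono ((hp.refine hf.measurable a).pr (hb.comp (hf.measurable.iterate a)))
    fun x y hxy => ?_).trans h1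
  simp only [pr, Prod.mk.injEq, Function.comp_apply, refinePart_eq_iff] at hxy ⊢
  intro t ht
  by_cases hta : t < a
  · exact hxy.1 t hta
  · have := hxy.2 (t - a) (by omega)
    rwa [← Function.iterate_add_apply, ← Function.iterate_add_apply,
      Nat.sub_add_cancel (by omega)] at this

omit [MetricSpace X] [BorelSpace X] [CompactSpace X] in
lemma mul_entropyOfPart_le {p : X → ι} (k : ℕ) :
    k * entropyOfPart η f p ≤ partInfo η (refinePart f p k) := by
  rcases k with _ | k
  · simpa using partInfo_nonneg _
  · have : entropyOfPart η f p ≤ partInfo η (refinePart f p (k + 1)) / (k + 1) :=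
      ciInf_le ⟨0, by
        rintro _ ⟨n, rfl⟩
        have := partInfo_nonneg (μ := η) (refinePart f p (n + 1))
        positivity⟩ k
    rw [le_div_iff₀ (by positivity)] at this
    push_cast; linarith

omit [MetricSpace X] [BorelSpace X] [CompactSpace X] in
lemma refine_le_linear (hf : MeasurePreserving f η η) {p : X → ι} (hp : FM ‹_› p) {δ : ℝ}
    (hδ : 0 < δ) :
    ∃ B, ∀ k : ℕ, partInfo η (refinePart f p k) ≤ k * (entropyOfPart η f p + δ) + B := by
  have hnn : 0 ≤ entropyOfPart η f p := Real.iInf_nonneg fun n => by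
    have := partInfo_nonneg (μ := η) (refinePart f p (n + 1))
    positivity
  obtain ⟨n, hn⟩ := exists_lt_of_ciInf_lt
    (show (⨅ n : ℕ, partInfo η (refinePart f p (n + 1)) / (n + 1)) < entropyOfPart η f p + δ from
      lt_add_of_pos_right _ hδ)
  rw [div_lt_iff₀ (by positivity)] at hn
  set c := entropyOfPart η f p + δ
  have hc : 0 < c := by positivity
  have hmul : ∀ j : ℕ, partInfo η (refinePart f p ((n + 1) * j)) ≤
      j * partInfo η (refinePart f p (n + 1)) + partInfo η (refinePart f p 0) := by
    intro j
    induction j with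
    | zero => simp
    | succ j ih =>
      have := refine_add_le hf hp ((n + 1) * j) (n + 1)
      rw [Nat.mul_succ]; push_cast; linarith
  refine ⟨(n + 1) * c + partInfo η (refinePart f p 0), fun k => ?_⟩
  have h1 : partInfo η (refinePart f p k) ≤
      partInfo η (refinePart f p ((n + 1) * (k / (n + 1) + 1))) := by
    refine partInfo_mono (hp.refine hf.measurable _) fun x y hxy => ?_
    rw [refinePart_eq_iff] at hxy ⊢
    intro t ht
    have := Nat.lt_mul_div_succ k (show 0 < n + 1 by omega)
    exact hxy t (by omega)
  have h2 := hmul (k / (n + 1) + 1)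
  have h3 : ((k / (n + 1) : ℕ) : ℝ) * (n + 1) ≤ k := by
    exact_mod_cast Nat.div_mul_le_self k (n + 1)
  push_cast at h2
  have h4 : (((k / (n + 1) : ℕ) : ℝ) + 1) * partInfo η (refinePart f p (n + 1)) ≤
      (((k / (n + 1) : ℕ) : ℝ) + 1) * (c * (n + 1)) := by gcongr
  nlinarith

omit [MetricSpace X] [BorelSpace X] [CompactSpace X] in
/-- The entropy of the first `k` symbols of `p` given any `m` subsequent ones is at least
`k` times the dynamical entropy. -/
lemma mul_entropy_le_cond (hf : MeasurePreserving f η η) {p : X → ι} (hp : FM ‹_› p)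
    (k m : ℕ) :
    k * entropyOfPart η f p ≤ cH η (refinePart f p k) (refinePart f p m ∘ f^[k]) := by
  set b : ℕ → ℝ := fun m => cH η (refinePart f p k) (refinePart f p m ∘ f^[k]) with hb
  have hr : ∀ m, FM ‹_› (refinePart f p m) := fun m => hp.refine hf.measurable m
  have hrk : ∀ m, FM ‹_› (refinePart f p m ∘ f^[k]) := fun m =>
    (hr m).comp (hf.measurable.iterate k)
  have hanti : ∀ m m', m ≤ m' → b m' ≤ b m := fun m m' hmm =>
    cH_mono_right (hr k) (hrk m') (hrk m) fun x y hxy => by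
      simp only [Function.comp_apply, refinePart_eq_iff] at hxy ⊢
      exact fun t ht => hxy t (by omega)
  have hstep : ∀ m, partInfo η (refinePart f p (m + k)) ≤ partInfo η (refinePart f p m) + b m := by
    intro m
    have : partInfo η (refinePart f p (m + k)) ≤
        partInfo η (pr (refinePart f p k) (refinePart f p m ∘ f^[k])) :=
      partInfo_mono ((hr k).pr (hrk m)) fun x y hxy => by
        simp only [pr, Prod.mk.injEq, Function.comp_apply, refinePart_eq_iff] at hxy ⊢
        intro t ht
        by_cases htk : t < k
        · exact hxy.1 t htk
        · have := hxy.2 (t - k) (by omega)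
          rwa [← Function.iterate_add_apply, ← Function.iterate_add_apply,
            Nat.sub_add_cancel (by omega)] at this
    simp only [hb, cH]
    rw [partInfo_comp (hf.iterate k) (hr m)]
    linarith
  have htel : ∀ j : ℕ, partInfo η (refinePart f p (m + j * k)) ≤
      partInfo η (refinePart f p m) + j * b m := by
    intro j
    induction j with
    | zero => rw [Nat.zero_mul, Nat.add_zero]; simp
    | succ j ih =>
      have h1 := hstep (m + j * k)
      have h2 := hanti m (m + j * k) (by omega)
      rw [show m + (j + 1) * k = m + j * k + k by ring]
      push_cast; linarith
  -- If `b m` were smaller than `k` times the entropy rate, the telescoped bound `htel` would make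
  -- the entropy of `m + j * k` symbols grow too slowly in `j`.
  by_contra hlt
  push Not at hlt
  change b m < _ at hlt
  set d := k * entropyOfPart η f p - b m with hd
  have hd0 : 0 < d := by linarith
  have hnn : 0 ≤ entropyOfPart η f p := Real.iInf_nonneg fun n => by
    have := partInfo_nonneg (μ := η) (refinePart f p (n + 1))
    positivity
  obtain ⟨j, hj⟩ := exists_nat_gt (partInfo η (refinePart f p m) / d)
  rw [div_lt_iff₀ hd0] at hj
  have h1 := htel j
  have h2 := mul_entropyOfPart_le (η := η) (f := f) (p := p) (m + j * k)
  push_cast at h2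
  have h3 : 0 ≤ (m : ℝ) * entropyOfPart η f p := by positivity
  have h4 : (j : ℝ) * d = j * (k * entropyOfPart η f p) - j * b m := by rw [hd]; ring
  nlinarith

/-- A partition `W` all of whose refinements are asymptotically determined by the remote future
of a generator `ξ` has zero entropy. -/
lemma ExpSys.zero_entropy (h : ExpSys f finv η e) {ξ : X → ι} (hξ : FM ‹_› ξ)
    (hCB : CB f e 1 ξ) {W : X → κ} (hW : FM ‹_› W)
    (htail : ∀ (k : ℕ) (δ : ℝ), 0 < δ → ∃ m,
      cH η (refinePart f W k) (refinePart f ξ m ∘ f^[k]) ≤ δ) {δ : ℝ} (hδ : 0 < δ) :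
    ∃ B, ∀ k : ℕ, partInfo η (refinePart f W k) ≤ k * δ + B := by
  obtain ⟨M, hM⟩ := h.generator (hξ.pr hW) (half_pos hδ)
  obtain ⟨B, hB⟩ := refine_le_linear h.mp hξ (half_pos hδ)
  refine ⟨B + partInfo η (refinePart f ξ (2 * M)), fun k => ?_⟩
  set E := entropyOfPart η f ξ
  -- Up to small errors, `h1` and `h2` bound the entropy of `ξ ∨ W` by that of `ξ`, while `h3`
  -- says that it exceeds the entropy of `W` by at least the entropy of `ξ`.
  have h1 := hM 1 le_rfl ι inferInstance ξ hξ hCB k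
  rw [one_mul, Function.iterate_one] at h1
  have h2 := refine_add_le h.mp hξ k (2 * M)
  have hWk := hW.refine h.mf k
  have hξk := hξ.refine h.mf k
  have h3 : partInfo η (refinePart f W k) + k * E ≤
      partInfo η (refinePart f (pr ξ W) k) := by
    refine le_of_forall_pos_le_add fun δ' hδ' => ?_
    obtain ⟨m, hm⟩ := htail k δ' hδ'
    have hr : FM ‹_› (refinePart f ξ m ∘ f^[k]) := (hξ.refine h.mf m).comp (h.mf.iterate k)
    have a1 := mul_entropy_le_cond h.mp hξ k m
    have a2 : cH η (refinePart f ξ k) (pr (refinePart f W k) (refinePart f ξ m ∘ f^[k])) ≤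
        cH η (refinePart f ξ k) (refinePart f W k) :=
      cH_mono_right hξk (hWk.pr hr) hWk fun x y hxy => (Prod.ext_iff.1 hxy).1
    have a3 : partInfo η (pr (refinePart f ξ k) (refinePart f ξ m ∘ f^[k])) ≤ partInfo η
        (pr (refinePart f ξ k) (pr (refinePart f W k) (refinePart f ξ m ∘ f^[k]))) :=
      partInfo_mono (hξk.pr (hWk.pr hr)) fun x y hxy => by
        simp only [pr, Prod.mk.injEq] at hxy ⊢; exact ⟨hxy.1, hxy.2.2⟩
    have a4 : partInfo η (pr (refinePart f ξ k) (refinePart f W k)) ≤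
        partInfo η (refinePart f (pr ξ W) k) :=
      partInfo_mono ((hξ.pr hW).refine h.mf k) fun x y hxy => by
        simp only [pr, Prod.mk.injEq, refinePart_eq_iff] at hxy ⊢
        exact ⟨fun t ht => (hxy t ht).1, fun t ht => (hxy t ht).2⟩
    unfold cH at *
    linarith
  have h4 := hB k
  linarith

lemma le_of_forall_nat_mul {x y B : ℝ} (h : ∀ k : ℕ, k * x ≤ k * y + B) : x ≤ y := by
  by_contra hlt
  push Not at hlt
  obtain ⟨k, hk⟩ := exists_nat_gt (B / (x - y))
  rw [div_lt_iff₀ (by linarith)] at hk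
  nlinarith [h k]

/-- Conditioning on a zero-entropy partition `W` does not lower the entropy of `α` below
`n h(f)`, when the cells of `α` are `e`-close for times `0, …, n - 1`. -/
lemma ExpSys.mul_entropyKS_le (h : ExpSys f finv η e) {W : X → κ} (hW : FM ‹_› W)
    (hzero : ∀ δ : ℝ, 0 < δ → ∃ B, ∀ k : ℕ, partInfo η (refinePart f W k) ≤ k * δ + B)
    {n : ℕ} (hn : 1 ≤ n) {α : X → ι} (hα : FM ‹_› α) (hCB : CB f e n α) :
    n * entropyKS η f ≤ cH η α W := by
  have hn0 : (0 : ℝ) < n := by exact_mod_cast hn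
  rw [mul_comm, ← le_div_iff₀ hn0]
  refine Real.sSup_le ?_ (div_nonneg (cH_nonneg hα hW) hn0.le)
  rintro _ ⟨b, β, hβ', rfl⟩
  have hβ : FM ‹_› β := FM.of_fibres hβ'
  rw [le_div_iff₀ hn0, mul_comm]
  -- entropy of `α` along the `f^n`-orbit, conditionally on the orbit of `W`
  have hstep : ∀ K : ℕ, partInfo η (refinePart f^[n] α K) ≤
      partInfo η (refinePart f W (n * K)) + K * cH η α W := by
    intro K
    have hg := h.mf.iterate n
    have hWK := hW.refine hg K
    have a1 := partInfo_le_add_cH (μ := η) (hα.refine hg K) hWK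
    have a2 : partInfo η (refinePart f^[n] W K) ≤ partInfo η (refinePart f W (n * K)) :=
      partInfo_mono (hW.refine h.mf _) fun x y hxy => by
        rw [refinePart_eq_iff] at hxy ⊢
        intro t ht
        rw [← Function.iterate_mul]
        exact hxy _ (Nat.mul_lt_mul_of_pos_left ht hn)
    have a3 : cH η (refinePart f^[n] α K) (refinePart f^[n] W K) ≤ ∑ _i : Fin K, cH η α W := by
      refine (cH_pi_le (fun i => hα.comp (hg.iterate i)) hWK).trans
        (Finset.sum_le_sum fun i _ => ?_)
      rw [← cH_comp ((h.mp.iterate n).iterate i) hα hW]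
      exact cH_mono_right (hα.comp (hg.iterate i)) hWK (hW.comp (hg.iterate i))
        fun x y hxy => refinePart_eq_iff.1 hxy i i.2
    simp only [Finset.sum_const, Finset.card_univ, Fintype.card_fin, nsmul_eq_mul] at a3
    linarith
  have key : ∀ δ : ℝ, 0 < δ → n * entropyOfPart η f β ≤ cH η α W + 2 * n * δ := by
    intro δ hδ
    obtain ⟨M, hM⟩ := h.generator hβ hδ
    obtain ⟨B, hB⟩ := hzero δ hδ
    refine le_of_forall_nat_mul (B := n * (2 * M) * δ + B + 2 * M * cH η α W) fun k => ?_
    have b1 := mul_entropyOfPart_le (η := η) (f := f) (p := β) (n * k)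
    have b2 := hM n hn ι inferInstance α hα hCB k
    have b3 := hstep (k + 2 * M)
    have b4 := hB (n * (k + 2 * M))
    push_cast at b1 b2 b3 b4
    nlinarith
  refine le_of_forall_pos_le_add fun δ hδ => ?_
  have := key (δ / (2 * n)) (by positivity)
  rwa [mul_div_cancel₀ _ (by positivity)] at this

end Dynamics

/-! ### Partitions adapted to Bowen balls -/

section Adapted

lemma measurableSet_bowenBall [MetricSpace X] [MeasurableSpace X] [BorelSpace X] {f : X → X}
    (hf : Continuous f) (n : ℕ) (ε : ℝ) (y : X) : MeasurableSet (bowenBall dist f n ε y) := by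
  have : bowenBall dist f n ε y = ⋂ k, ⋂ (_ : k < n), {x | dist (f^[k] y) (f^[k] x) ≤ ε} := by
    ext x; simp [bowenBall]
  rw [this]
  exact (isClosed_iInter fun k => isClosed_iInter fun _ =>
    isClosed_le (continuous_const.dist (hf.iterate k)) continuous_const).measurableSet

/-- A finite maximal `(n,ε)`-separated family `y`. -/
lemma exists_separated_spanning [MetricSpace X] [CompactSpace X] {f : X → X}
    (hf : Continuous f) (n : ℕ) {ε : ℝ} (hε : 0 < ε) :
    ∃ (N : ℕ) (y : Fin N → X),
      (∀ i j, i ≠ j → ¬ ∀ k < n, dist (f^[k] (y i)) (f^[k] (y j)) ≤ ε) ∧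
      ∀ x, ∃ i, x ∈ bowenBall dist f n ε (y i) := by
  let F : X → (Fin n → X) := fun x k => f^[(k : ℕ)] x
  have hF : Continuous F := continuous_pi fun k => hf.iterate k
  have hd : ∀ x y, edist (F x) (F y) ≤ ENNReal.ofReal ε ↔
      ∀ k < n, dist (f^[k] x) (f^[k] y) ≤ ε := by
    intro x y
    rw [edist_dist, ENNReal.ofReal_le_ofReal_iff hε.le, dist_pi_le_iff hε.le]
    exact ⟨fun h k hk => h ⟨k, hk⟩, fun h k => h k k.2⟩
  -- the packing number is finite because the image of `F` is compact
  have hfin : Metric.packingNumber ε.toNNReal (Set.range F) ≠ ⊤ := by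
    obtain ⟨C, -, hC, hcov⟩ := Metric.exists_finite_isCover_of_isCompact
      (ε := ε.toNNReal / 2) (by simpa using hε) (isCompact_range hF)
    have h2 : (2 : NNReal) * (ε.toNNReal / 2) = ε.toNNReal := by
      rw [mul_div_cancel₀]; norm_num
    have h1 := Metric.packingNumber_two_mul_le_externalCoveringNumber (ε.toNNReal / 2)
      (Set.range F)
    rw [h2] at h1
    exact ((h1.trans hcov.externalCoveringNumber_le_encard).trans_lt hC.encard_lt_top).ne
  set E := Metric.maximalSeparatedSet ε.toNNReal (Set.range F) with hE
  have hEfin : E.Finite := by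
    rw [← Set.encard_lt_top_iff, Metric.encard_maximalSeparatedSet hfin]
    exact lt_top_iff_ne_top.2 hfin
  obtain ⟨N, ⟨u⟩⟩ : ∃ N, Nonempty (Fin N ≃ E) := by
    have := hEfin.to_subtype
    exact ⟨_, ⟨(Finite.equivFin E).symm⟩⟩
  choose y hy using fun i => Metric.maximalSeparatedSet_subset (u i).2
  refine ⟨N, y, fun i j hij hk => ?_, fun x => ?_⟩
  · have h1 := Metric.isSeparated_maximalSeparatedSet (u i).2 (u j).2
      (fun h => hij (u.injective (Subtype.ext h)))
    rw [← hy, ← hy] at h1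
    exact absurd ((hd _ _).2 hk) (not_le.2 h1)
  · obtain ⟨z, hz, hxz⟩ := Metric.isCover_maximalSeparatedSet hfin (Set.mem_range_self x)
    obtain ⟨i, hi⟩ := u.surjective ⟨z, hz⟩
    refine ⟨i, (hd _ _).1 ?_⟩
    rw [hy, hi, edist_comm]
    exact hxz

/-- A finite measurable partition adapted to Bowen balls: the cell of index `i` contains
`B_n(y_i, ε/3)` and is contained in `B_n(y_i, ε)`. -/
lemma exists_adapted [MetricSpace X] [CompactSpace X] [MeasurableSpace X] [BorelSpace X]
    {f : X → X} (hf : Continuous f) (n : ℕ) {ε : ℝ} (hε : 0 < ε) :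
    ∃ (N : ℕ) (y : Fin N → X) (α : X → Fin N), FM ‹_› α ∧
      (∀ i, bowenBall dist f n (ε / 3) (y i) ⊆ α ⁻¹' {i}) ∧
      ∀ x, x ∈ bowenBall dist f n ε (y (α x)) := by
  obtain ⟨N, y, hsep, hspan⟩ := exists_separated_spanning hf n hε
  set b : Fin N → Set X := fun i => bowenBall dist f n (ε / 3) (y i)
  set B : Fin N → Set X := fun i => bowenBall dist f n ε (y i)
  have hb : ∀ i, MeasurableSet (b i) := fun i => measurableSet_bowenBall hf _ _ _
  have hB : ∀ i, MeasurableSet (B i) := fun i => measurableSet_bowenBall hf _ _ _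
  have hdisj : ∀ x i j, x ∈ b i → x ∈ b j → i = j := by
    intro x i j hi hj
    by_contra hij
    refine hsep i j hij fun k hk => (dist_triangle_right _ _ (f^[k] x)).trans ?_
    have h1 := hi k hk
    have h2 := hj k hk
    linarith
  -- balls of radius `ε/3` are disjoint; points outside all of them go to the first `B i`
  let R : Fin N → Set X := fun i => b i ∪ ((⋂ j, (b j)ᶜ) ∩ (B i ∩ ⋂ j, ⋂ (_ : j < i), (B j)ᶜ))
  have hex : ∀ x, ∃ i, x ∈ R i := by
    intro x
    by_cases hx : ∃ i, x ∈ b i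
    · exact hx.imp fun i hi => Or.inl hi
    · push Not at hx
      obtain ⟨i, hi, hmin⟩ := WellFounded.has_min (wellFounded_lt (α := Fin N)) {i | x ∈ B i}
        (hspan x)
      refine ⟨i, Or.inr ⟨Set.mem_iInter.2 hx, hi, ?_⟩⟩
      simp only [Set.mem_iInter]
      exact fun j hj hxj => hmin j hxj hj
  have huniq : ∀ x i j, x ∈ R i → x ∈ R j → i = j := by
    intro x i j hi hj
    rcases hi with hi | ⟨hi0, hi1, hi2⟩ <;> rcases hj with hj | ⟨hj0, hj1, hj2⟩
    · exact hdisj x i j hi hj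
    · exact absurd hi (Set.mem_iInter.1 hj0 i)
    · exact absurd hj (Set.mem_iInter.1 hi0 j)
    · simp only [Set.mem_iInter] at hi2 hj2
      rcases lt_trichotomy i j with h | h | h
      · exact absurd hi1 (hj2 i h)
      · exact h
      · exact absurd hj1 (hi2 j h)
  choose α hα using hex
  have hfib : ∀ i, α ⁻¹' {i} = R i := fun i => by
    ext x
    exact ⟨fun h => h ▸ hα x, fun h => huniq x _ _ (hα x) h⟩
  refine ⟨N, y, α, FM.of_fibres fun i => ?_, fun i => ?_, fun x => ?_⟩
  · rw [hfib]
    exact (hb i).union ((MeasurableSet.iInter fun j => (hb j).compl).inter ((hB i).inter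
      (MeasurableSet.iInter fun j => MeasurableSet.iInter fun _ => (hB j).compl)))
  · rw [hfib]; exact Set.subset_union_left
  · rcases hα x with h | h
    · intro k hk
      have := h k hk
      linarith
    · exact h.2.1

variable [MetricSpace X] [CompactSpace X] [MeasurableSpace X] [BorelSpace X]
  {f : X → X} {φ : ℕ → X → ℝ} {η : Measure X} [IsProbabilityMeasure η]

lemma integrable_log (hφ : IsSubadditivePotential f φ) (n : ℕ) :
    Integrable (fun x => Real.log (φ n x)) η :=
  ((hφ.1 n).log fun x => (hφ.2.1 n x).ne').integrable_of_hasCompactSupport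
    (HasCompactSupport.of_compactSpace _)

/-- The averages `(1/n) ∫ log φ_n` of a subadditive potential dominate their limit. -/
lemma mul_le_integral (hφ : IsSubadditivePotential f φ) (hf : MeasurePreserving f η η) {L : ℝ}
    (hL : Tendsto (fun n : ℕ => (∫ x, Real.log (φ n x) ∂η) / n) atTop (nhds L)) {n : ℕ}
    (hn : 1 ≤ n) : n * L ≤ ∫ x, Real.log (φ n x) ∂η := by
  set a : ℕ → ℝ := fun n => ∫ x, Real.log (φ n x) ∂η with ha
  have hn0 : (0 : ℝ) < n := by exact_mod_cast hn
  have hadd : ∀ m k, 1 ≤ m → 1 ≤ k → a (m + k) ≤ a m + a k := by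
    intro m k hm hk
    have hi : Integrable (fun x => Real.log (φ k (f^[m] x))) η :=
      (hf.iterate m).integrable_comp_of_integrable (integrable_log hφ k)
    have e : ∫ x, Real.log (φ k (f^[m] x)) ∂η = a k := by
      have h1 := integral_map (hf.iterate m).aemeasurable (μ := η)
        (f := fun x => Real.log (φ k x)) (by
          rw [(hf.iterate m).map_eq]; exact (integrable_log hφ k).aestronglyMeasurable)
      rw [(hf.iterate m).map_eq] at h1
      exact h1.symm
    rw [← e, ha, ← integral_add (integrable_log hφ m) hi]
    exact integral_mono (integrable_log hφ _) ((integrable_log hφ m).add hi)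
      fun x => hφ.2.2 m k hm hk x
  have hmul : ∀ k : ℕ, a ((k + 1) * n) ≤ (k + 1 : ℕ) * a n := by
    intro k
    induction k with
    | zero => simp
    | succ k ih =>
      have := hadd ((k + 1) * n) n (by nlinarith) hn
      rw [add_mul (k + 1) 1 n, one_mul]
      push_cast at ih ⊢; linarith
  have hlim := hL.comp ((tendsto_add_atTop_nat 1).atTop_mul_const' (show 0 < n by omega))
  rw [mul_comm, ← le_div_iff₀ hn0]
  refine le_of_tendsto' hlim fun k => ?_
  simp only [Function.comp_apply]
  have h1 := hmul k
  have hk : (0 : ℝ) < k + 1 := by positivity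
  push_cast at h1 ⊢
  rw [div_le_div_iff₀ (by positivity) hn0]
  change a ((k + 1) * n) * n ≤ a n * ((k + 1) * n)
  nlinarith

/-- The lower Gibbs bound gives, for each `n`, a partition with cells of size `e` along orbits of
length `n`, whose entropy exceeds `n h(f)` by a bounded amount. -/
lemma exists_partition_entropy_le {e : ℝ} (he : 0 < e) (hf : Continuous f)
    (hφ : IsSubadditivePotential f φ) (hbd : HasBoundedDistortion dist f φ)
    (hEq : IsEqState dist f φ η) (hG : HasLowerGibbs dist f φ η) :
    ∃ c : ℝ, ∀ n, 1 ≤ n → ∃ (N : ℕ) (α : X → Fin N), FM ‹_› α ∧ CB f e n α ∧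
      partInfo η α ≤ n * entropyKS η f + c := by
  obtain ⟨-, hmp, L, hL, hP⟩ := hEq
  obtain ⟨C, hC, ε₁, hε₁, hC'⟩ := hbd
  set ε := min ε₁ (e / 2) with hεdef
  have hε : 0 < ε := lt_min hε₁ (by positivity)
  obtain ⟨D, hD, hD'⟩ := hG (ε / 3) (by positivity)
  refine ⟨Real.log C + Real.log D, fun n hn => ?_⟩
  obtain ⟨N, y, α, hα, hsub, hsup⟩ := exists_adapted hf n hε
  refine ⟨N, α, hα, fun x x' hxx t ht => ?_, ?_⟩
  · have h1 := hsup x t ht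
    have h2 := hsup x' t ht
    rw [← hxx] at h2
    have : ε ≤ e / 2 := min_le_right _ _
    exact (dist_triangle_left _ _ (f^[t] (y (α x)))).trans (by linarith)
  set P := pressure dist f φ
  have hpos := hφ.2.1
  have hptw : ∀ x, Real.log (φ n x) ≤ Real.log C + Real.log (φ n (y (α x))) := by
    intro x
    have h1 := (hC' ε hε (min_le_left _ _) (y (α x)) n x (hsup x) (y (α x))
      (fun k _ => by rw [dist_self]; exact hε.le)).2
    rw [div_le_iff₀ (hpos _ _)] at h1
    rw [← Real.log_mul (by positivity) (hpos _ _).ne']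
    exact Real.log_le_log (hpos _ _) h1
  have hfib : ∀ i, D⁻¹ * Real.exp (-(n : ℝ) * P) * φ n (y i) ≤ η.real (α ⁻¹' {i}) := by
    intro i
    exact (ENNReal.ofReal_le_iff_le_toReal (measure_ne_top _ _)).1
      ((hD' (y i) n).trans (measure_mono (hsub i)))
  have hneg : ∀ i, Real.negMulLog (η.real (α ⁻¹' {i})) ≤
      η.real (α ⁻¹' {i}) * (Real.log D + n * P - Real.log (φ n (y i))) := by
    intro i
    have hp := hpos n (y i)
    have h1 := Real.log_le_log (by positivity) (hfib i)
    rw [Real.log_mul (by positivity) hp.ne', Real.log_mul (by positivity) (by positivity),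
      Real.log_inv, Real.log_exp] at h1
    rw [Real.negMulLog, neg_mul, ← mul_neg]
    exact mul_le_mul_of_nonneg_left (by linarith) measureReal_nonneg
  have hint : ∀ g : Fin N → ℝ, ∫ x, g (α x) ∂η = ∑ i, η.real (α ⁻¹' {i}) * g i := by
    intro g
    have hαm : Measurable α := fun s _ => hα s
    rw [← integral_map (f := g) hαm.aemeasurable
      (measurable_of_finite g).aestronglyMeasurable, integral_fintype]
    · refine Finset.sum_congr rfl fun i _ => ?_
      rw [map_measureReal_apply hαm (measurableSet_singleton i), smul_eq_mul]
    · exact Integrable.of_finite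
  have hone : ∑ i, η.real (α ⁻¹' {i}) = 1 := by
    have := hint fun _ => 1
    simpa using this.symm
  have hi : Integrable (fun x => Real.log C + Real.log (φ n (y (α x)))) η := by
    have hαm : Measurable α := fun s _ => hα s
    exact (integrable_const _).add
      ((Integrable.of_finite (f := fun i => Real.log (φ n (y i))) (μ := η.map α)).comp_measurable
        hαm)
  have h1 : ∫ x, Real.log (φ n x) ∂η ≤
      Real.log C + ∑ i, η.real (α ⁻¹' {i}) * Real.log (φ n (y i)) := by
    refine (integral_mono (integrable_log hφ n) hi hptw).trans_eq ?_
    rw [hint fun i => Real.log C + Real.log (φ n (y i))]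
    simp only [mul_add, Finset.sum_add_distrib, ← Finset.sum_mul, hone, one_mul]
  have h2 : partInfo η α ≤ Real.log D + n * P -
      ∑ i, η.real (α ⁻¹' {i}) * Real.log (φ n (y i)) := by
    rw [partInfo_eq]
    refine (Finset.sum_le_sum fun i _ => hneg i).trans_eq ?_
    simp only [mul_sub, Finset.sum_sub_distrib, ← Finset.sum_mul, hone, one_mul]
  have h3 := mul_le_integral hφ hmp hL hn
  have h4 : (n : ℝ) * P = n * entropyKS η f + n * L := by rw [← hP]; ring
  linarith

end Adapted

/-! ### The future σ-algebra and its tail -/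

section Future

/-- The σ-algebra generated by the future `(ξ(f^t x))_{t ≥ 0}` of the process defined by `ξ`. -/
abbrev futureAlg (f : X → X) {ι : Type} (ξ : X → ι) : MeasurableSpace X :=
  MeasurableSpace.generateFrom {s | ∃ (N : ℕ) (S : Set (Fin N → ι)), refinePart f ξ N ⁻¹' S = s}

/-- The remote future `⋂_n f^{-n} K` of a σ-algebra `K`, with `finv` the inverse of `f`. -/
abbrev tailAlg (finv : X → X) (K : MeasurableSpace X) : MeasurableSpace X :=
  ⨅ n : ℕ, K.map (finv^[n])

variable {f finv : X → X} {ι : Type} {ξ : X → ι}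

lemma measurableSet_futureAlg (N : ℕ) (S : Set (Fin N → ι)) :
    MeasurableSet[futureAlg f ξ] (refinePart f ξ N ⁻¹' S) :=
  MeasurableSpace.measurableSet_generateFrom ⟨N, S, rfl⟩

/-- A set depending only on `ξ(x), …, ξ(f^{N-1} x)` belongs to the future. -/
lemma FM.future {κ : Type} {q : X → κ} {N : ℕ}
    (h : ∀ x y, (∀ t < N, ξ (f^[t] x) = ξ (f^[t] y)) → q x = q y) : FM (futureAlg f ξ) q :=
  FM.of_factor (q := refinePart f ξ N) (measurableSet_futureAlg N)
    fun x y hxy => h x y (refinePart_eq_iff.1 hxy)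

lemma refine_lift {N N' : ℕ} (h : N ≤ N') (S : Set (Fin N → ι)) :
    ∃ S' : Set (Fin N' → ι), refinePart f ξ N' ⁻¹' S' = refinePart f ξ N ⁻¹' S :=
  ⟨{w | (fun j => w (Fin.castLE h j)) ∈ S}, rfl⟩

lemma isSetAlgebra_future : IsSetAlgebra
    {s | ∃ (N : ℕ) (S : Set (Fin N → ι)), refinePart f ξ N ⁻¹' S = s} where
  empty_mem := ⟨0, ∅, rfl⟩
  compl_mem := by
    rintro _ ⟨N, S, rfl⟩
    exact ⟨N, Sᶜ, rfl⟩
  union_mem := by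
    rintro _ _ ⟨N, S, rfl⟩ ⟨N', S', rfl⟩
    obtain ⟨R, hR⟩ := refine_lift (f := f) (ξ := ξ) (le_max_left N N') S
    obtain ⟨R', hR'⟩ := refine_lift (f := f) (ξ := ξ) (le_max_right N N') S'
    exact ⟨max N N', R ∪ R', by rw [Set.preimage_union, hR, hR']⟩

lemma futureAlg_le_map : futureAlg f ξ ≤ (futureAlg f ξ).map f := by
  refine MeasurableSpace.generateFrom_le ?_
  rintro _ ⟨N, S, rfl⟩
  refine FM.future (ξ := ξ) (f := f) (N := N + 1) (q := refinePart f ξ N ∘ f) (fun x y h => ?_) S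
  simp only [Function.comp_apply, refinePart_eq_iff, ← Function.iterate_succ_apply]
  exact fun t ht => h _ (by omega)

lemma measurableSet_tailAlg {K : MeasurableSpace X} {A : Set X} :
    MeasurableSet[tailAlg finv K] A ↔ ∀ n : ℕ, MeasurableSet[K] (finv^[n] ⁻¹' A) := by
  rw [tailAlg, MeasurableSpace.measurableSet_iInf]; rfl

lemma tailAlg_le (K : MeasurableSpace X) : tailAlg finv K ≤ K := fun _ hA =>
  measurableSet_tailAlg.1 hA 0

lemma tailAlg_preimage (hleft : Function.LeftInverse finv f)
    (hright : Function.RightInverse finv f) {K : MeasurableSpace X} (hK : K ≤ K.map f)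
    {A : Set X} (hA : MeasurableSet[tailAlg finv K] A) :
    MeasurableSet[tailAlg finv K] (f ⁻¹' A) := by
  rw [measurableSet_tailAlg] at hA ⊢
  intro n
  have hcomm : Function.Commute finv f := fun x => by rw [hleft, hright]
  have : finv^[n] ⁻¹' (f ⁻¹' A) = f ⁻¹' (finv^[n] ⁻¹' A) := by
    ext x
    simp only [Set.mem_preimage, (hcomm.iterate_left n).eq]
  rw [this]
  exact hK _ (hA n)

lemma tailAlg_preimage_iterate (hleft : Function.LeftInverse finv f)
    (hright : Function.RightInverse finv f) {K : MeasurableSpace X} (hK : K ≤ K.map f) (n : ℕ)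
    {A : Set X} (hA : MeasurableSet[tailAlg finv K] A) :
    MeasurableSet[tailAlg finv K] (f^[n] ⁻¹' A) := by
  induction n generalizing A with
  | zero => exact hA
  | succ n ih => exact tailAlg_preimage hleft hright hK (ih hA)

variable [MetricSpace X] [CompactSpace X] [m : MeasurableSpace X] [BorelSpace X] {η : Measure X}
  {e : ℝ}

omit [CompactSpace X] in
lemma futureAlg_le [Finite ι] (h : ExpSys f finv η e) (hξ : FM ‹_› ξ) :
    futureAlg f ξ ≤ m := by
  refine MeasurableSpace.generateFrom_le ?_
  rintro _ ⟨N, S, rfl⟩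
  exact hξ.refine h.mf N S

/-- The two-sided itinerary with respect to `ξ` separates points, so the future generates the
Borel σ-algebra under backward iteration. -/
lemma iSup_futureAlg {N : ℕ} {ξ : X → Fin N}
    (h : ExpSys f finv η e) (hξ : FM m ξ) (hCB : CB f e 1 ξ) :
    (⨆ n : ℕ, (futureAlg f ξ).map (f^[n])) = m := by
  apply le_antisymm
  · refine iSup_le fun n s hs => ?_
    have h1 : MeasurableSet (f^[n] ⁻¹' s) := futureAlg_le h hξ _ hs
    have h2 : s = finv^[n] ⁻¹' (f^[n] ⁻¹' s) := by
      ext x; simp only [Set.mem_preimage, h.iter_right]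
    rw [h2]
    exact h.mfinv.iterate n h1
  · let F : X → (ℕ → Fin N × Fin N) := fun x n => (ξ (f^[n] x), ξ (finv^[n] x))
    have hξm : Measurable ξ := fun s _ => hξ s
    have hF : Measurable F := measurable_pi_lambda _ fun n =>
      (hξm.comp (h.mf.iterate n)).prodMk (hξm.comp (h.mfinv.iterate n))
    -- an injective Borel map between standard Borel spaces is an embedding
    have hinj : Function.Injective F := fun x y hxy => h.exp x y fun n => by
      have := Prod.ext_iff.1 (congrFun hxy n)
      exact ⟨hCB _ _ this.1 0 one_pos, hCB _ _ this.2 0 one_pos⟩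
    have hemb := hF.measurableEmbedding hinj
    have hF' : Measurable[⨆ n : ℕ, (futureAlg f ξ).map (f^[n])] F := by
      refine @measurable_pi_lambda _ _ _ (_) _ _ fun n => ?_
      intro S _
      refine le_iSup (fun n : ℕ => (futureAlg f ξ).map (f^[n])) n _ ?_
      refine FM.future (N := 2 * n + 1) (q := (fun x => F x n) ∘ f^[n]) (fun x y hxy => ?_) S
      simp only [F, Function.comp_apply, h.iter_left, ← Function.iterate_add_apply]
      rw [hxy (n + n) (by omega), show ξ x = ξ y from hxy 0 (by omega)]
    intro s hs
    have := hF' (hemb.measurableSet_image.2 hs)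
    rwa [hinj.preimage_image] at this

variable [IsProbabilityMeasure η] [Fintype ι]

omit [CompactSpace X] in
/-- Partitions measurable in the remote future of `ξ` are asymptotically determined by far-away
segments of the future. -/
lemma ExpSys.tail_approx (h : ExpSys f finv η e) (hξ : FM ‹_› ξ) {κ : Type} [Fintype κ]
    {W : X → κ} (hW : FM (tailAlg finv (futureAlg f ξ)) W) (k : ℕ) {δ : ℝ} (hδ : 0 < δ) :
    ∃ m, cH η (refinePart f W k) (refinePart f ξ m ∘ f^[k]) ≤ δ := by
  have hle := futureAlg_le h hξ
  obtain ⟨δ', hδ', hsm⟩ := cH_small (X := X) (μ := η) (Fin k → κ) δ hδ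
  have hV : FM (tailAlg finv (futureAlg f ξ)) (refinePart f W k) := FM.pi fun i s =>
    tailAlg_preimage_iterate h.left h.right futureAlg_le_map i (hW s)
  have happ : ∀ i, ∃ (N : ℕ) (S : Set (Fin N → ι)),
      η.real (symmDiff (finv^[k] ⁻¹' (refinePart f W k ⁻¹' {i})) (refinePart f ξ N ⁻¹' S)) ≤ δ' := by
    intro i
    have hB := measurableSet_tailAlg.1 (hV {i}) k
    have hdense := @Measure.MeasureDense.of_generateFrom_isSetAlgebra_finite X (futureAlg f ξ)
      (η.trim hle) _ _ (isSetAlgebra_future (f := f) (ξ := ξ)) rfl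
    obtain ⟨_, ⟨N, S, rfl⟩, ht⟩ := @Measure.MeasureDense.approx X (futureAlg f ξ) _ _
      hdense _ hB (@measure_ne_top _ (futureAlg f ξ) _ _ _) δ' hδ'
    rw [trim_measurableSet_eq hle
      (@MeasurableSet.symmDiff _ (futureAlg f ξ) _ _ hB (measurableSet_futureAlg N S))] at ht
    exact ⟨N, S, ENNReal.toReal_le_of_le_ofReal hδ'.le ht.le⟩
  choose N S hS using happ
  refine ⟨Finset.univ.sup N, hsm _ (hV.mono ((tailAlg_le _).trans hle)) _ _ _
    ((hξ.refine h.mf _).comp (h.mf.iterate k)) fun i => ?_⟩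
  obtain ⟨S', hS'⟩ := refine_lift (f := f) (ξ := ξ)
    (Finset.le_sup (f := N) (Finset.mem_univ i)) (S i)
  refine ⟨S', ?_⟩
  have hm : MeasurableSet (symmDiff (finv^[k] ⁻¹' (refinePart f W k ⁻¹' {i}))
      (refinePart f ξ (N i) ⁻¹' S i)) :=
    (h.mfinv.iterate k (hV.mono ((tailAlg_le _).trans hle) {i})).symmDiff (hξ.refine h.mf _ _)
  have h1 := (h.mp.iterate k).measureReal_preimage hm.nullMeasurableSet
  rw [Set.preimage_comp, hS']
  refine le_of_eq_of_le ?_ (hS i)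
  rw [← h1]
  congr 1
  ext x
  simp only [Set.mem_symmDiff, Set.mem_preimage, h.iter_left]

end Future

/-! ### Weak mixing and growth of entropy -/

section WeakMixing

/-- Finitely many sets of upper density zero miss arbitrarily large integers. -/
lemma neBot_compl_of_density {σ : Type} [Fintype σ] {E : σ → Set ℕ}
    (hE : ∀ s, UpperDensityZero (E s)) : (atTop ⊓ Filter.principal (⋃ s, E s)ᶜ).NeBot := by
  rw [Filter.inf_principal_neBot_iff]
  intro U hU
  obtain ⟨n₀, hn₀⟩ := Filter.mem_atTop_sets.1 hU
  by_contra hne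
  rw [Set.not_nonempty_iff_eq_empty] at hne
  have hsub : ∀ n, n₀ ≤ n → n ∈ ⋃ s, E s := fun n hn => by
    by_contra h
    exact (hne ▸ (⟨hn₀ n hn, h⟩ : n ∈ U ∩ (⋃ s, E s)ᶜ) : n ∈ (∅ : Set ℕ))
  have hcard : ∀ n : ℕ, n ≤ n₀ + ∑ s, Nat.card (E s ∩ Set.Iio n : Set ℕ) := by
    classical
    intro n
    have hfin : ∀ s, (E s ∩ Set.Iio n).Finite := fun s => (Set.finite_Iio n).inter_of_right _
    have hc : Finset.range n ⊆
        Finset.range n₀ ∪ Finset.univ.biUnion fun s => (hfin s).toFinset := by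
      intro k hk
      simp only [Finset.mem_union, Finset.mem_range, Finset.mem_biUnion, Finset.mem_univ, true_and,
        Set.Finite.mem_toFinset, Set.mem_inter_iff, Set.mem_Iio] at hk ⊢
      rcases lt_or_ge k n₀ with h | h
      · exact Or.inl h
      · obtain ⟨s, hs⟩ := Set.mem_iUnion.1 (hsub k h)
        exact Or.inr ⟨s, hs, hk⟩
    have h1 := (Finset.card_le_card hc).trans (Finset.card_union_le _ _)
    rw [Finset.card_range, Finset.card_range] at h1
    refine h1.trans (Nat.add_le_add_left (Finset.card_biUnion_le.trans
      (Finset.sum_le_sum fun s _ => ?_)) _)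
    rw [← Set.ncard_eq_toFinset_card _ (hfin s), Nat.card_coe_set_eq]
  have hlim : Tendsto (fun n : ℕ => (n₀ : ℝ) / n +
      ∑ s, (Nat.card (E s ∩ Set.Iio n : Set ℕ) : ℝ) / n) atTop (nhds (0 + ∑ _s : σ, 0)) :=
    (tendsto_const_div_atTop_nhds_zero_nat _).add (tendsto_finsetSum _ fun s _ => hE s)
  rw [Finset.sum_const_zero, add_zero] at hlim
  have h1 : (1 : ℝ) ≤ 0 := ge_of_tendsto hlim <| by
    filter_upwards [Filter.eventually_ge_atTop 1] with n hn
    have hn0 : (0 : ℝ) < n := by exact_mod_cast hn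
    rw [← Finset.sum_div, ← add_div, le_div_iff₀ hn0, one_mul]
    exact_mod_cast hcard n
  norm_num at h1

section

variable [m0 : MeasurableSpace X] {f : X → X} {η : Measure X} [IsProbabilityMeasure η]

lemma sum_real_eq_one {ι : Type} [Fintype ι] {p : X → ι} (hp : FM m0 p) :
    ∑ i, η.real (p ⁻¹' {i}) = 1 := by
  classical
  have := real_factor (μ := η) hp (fun _ => ()) ()
  have hu : (fun _ : ι => ()) ∘ p ⁻¹' {()} = Set.univ := by ext; simp
  rw [hu, probReal_univ] at this
  simpa using this.symm

/-- Under weak mixing, `f^{-n} p` becomes independent of `W` along a suitable sequence of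
times, so that the entropy of the join tends to the sum of the entropies. -/
lemma exists_tendsto_partInfo (hwm : IsWeaklyMixing η f) {ι κ : Type} [Fintype ι] [Fintype κ]
    {W : X → ι} {p : X → κ} (hW : FM m0 W) (hp : FM m0 p) :
    ∃ l : Filter ℕ, l.NeBot ∧
      Tendsto (fun n => partInfo η (pr W (p ∘ f^[n]))) l (nhds (partInfo η W + partInfo η p)) := by
  choose E hE hlim using fun s : ι × κ => hwm (p ⁻¹' {s.2}) (W ⁻¹' {s.1}) (hp _) (hW _)
  refine ⟨atTop ⊓ Filter.principal (⋃ s, E s)ᶜ, neBot_compl_of_density hE, ?_⟩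
  have hval : partInfo η W + partInfo η p = ∑ s : ι × κ,
      Real.negMulLog (η.real (p ⁻¹' {s.2}) * η.real (W ⁻¹' {s.1})) := by
    rw [Fintype.sum_prod_type]
    simp only [Real.negMulLog_mul, Finset.sum_add_distrib, ← Finset.mul_sum, ← Finset.sum_mul,
      sum_real_eq_one hW, sum_real_eq_one hp, one_mul, partInfo_eq]
    ring
  rw [hval]
  refine tendsto_finsetSum _ fun s _ => (Real.continuous_negMulLog.tendsto _).comp ?_
  have h1 := (hlim s).mono_left (inf_le_inf_left atTop
    (Filter.principal_mono.2 (Set.compl_subset_compl.2 (Set.subset_iUnion E s))))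
  have h2 := (ENNReal.tendsto_toReal (by finiteness)).comp h1
  rw [ENNReal.toReal_mul] at h2
  refine h2.congr fun n => ?_
  simp only [Function.comp_apply]
  congr 2
  ext x
  simp only [pr, Set.mem_inter_iff, Set.mem_preimage, Set.mem_singleton_iff, Prod.ext_iff,
    Function.comp_apply]
  exact and_comm

end

/-- If all finite partitions measurable with respect to an invariant sub-σ-algebra `T` have
entropy at most `c`, then weak mixing forces `T` to be trivial. -/
lemma trivial_of_bounded {T : MeasurableSpace X} [m0 : MeasurableSpace X] {f : X → X}
    {η : Measure X} [IsProbabilityMeasure η] (hwm : IsWeaklyMixing η f) (hT : T ≤ m0)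
    (hTf : ∀ A, MeasurableSet[T] A → MeasurableSet[T] (f ⁻¹' A)) {c : ℝ}
    (hc : ∀ (ι : Type) (_ : Fintype ι) (W : X → ι), FM T W → partInfo η W ≤ c)
    {A : Set X} (hA : MeasurableSet[T] A) : η A = 0 ∨ η A = 1 := by
  by_contra! hne
  have hA0 : 0 < η.real A := ENNReal.toReal_pos hne.1 (measure_ne_top _ _)
  have hA1 : η.real A < 1 := by
    refine lt_of_le_of_ne measureReal_le_one fun h => hne.2 ?_
    rw [← ENNReal.toReal_eq_one_iff]; exact h
  have hit : ∀ n B, MeasurableSet[T] B → MeasurableSet[T] (f^[n] ⁻¹' B) := by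
    intro n
    induction n with
    | zero => exact fun B hB => hB
    | succ n ih => exact fun B hB => hTf _ (ih B hB)
  have hp : FM T (fun x => x ∈ A) := FM.mem hA
  set p : X → Prop := fun x => x ∈ A
  have hb : 0 < partInfo η p := by
    rw [partInfo_mem (hT A hA)]
    have h1 : 0 < Real.negMulLog (η.real A) := by
      rw [Real.negMulLog, neg_mul, neg_pos]
      exact mul_neg_of_pos_of_neg hA0 (Real.log_neg hA0 hA1)
    have h2 := Real.negMulLog_nonneg (x := 1 - η.real A) (by linarith) (by linarith)
    linarith
  -- joining `f^{-n} {A, Aᶜ}` for suitable `n` adds almost all of `H({A, Aᶜ})` at each step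
  have hgrow : ∀ k : ℕ, ∃ (ι : Type) (_ : Fintype ι) (W : X → ι), FM T W ∧
      k * (partInfo η p / 2) ≤ partInfo η W := by
    intro k
    induction k with
    | zero =>
      refine ⟨Unit, inferInstance, fun _ => (), FM.of_fibres fun i => ?_, ?_⟩
      · simp
      · rw [Nat.cast_zero, zero_mul]; exact partInfo_nonneg _
    | succ k ih =>
      obtain ⟨ι, _, W, hW, hk⟩ := ih
      obtain ⟨l, hl, hlim⟩ := exists_tendsto_partInfo hwm (hW.mono hT) (hp.mono hT)
      obtain ⟨n, hn⟩ := (hlim.eventually_const_lt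
        (show partInfo η W + partInfo η p / 2 < _ by linarith)).exists
      have hpn : FM T (p ∘ f^[n]) := fun s => hit n _ (hp s)
      refine ⟨ι × Prop, inferInstance, pr W (p ∘ f^[n]), hW.pr hpn, ?_⟩
      push_cast; linarith
  obtain ⟨k, hk⟩ := exists_nat_gt (c / (partInfo η p / 2))
  rw [div_lt_iff₀ (by positivity)] at hk
  obtain ⟨ι, _, W, hW, hkW⟩ := hgrow k
  linarith [hc ι inferInstance W hW]

end WeakMixing

/-! ### The K-property -/

/-- **Theorem 3.5.** Let `(X,f)` be an expansive homeomorphism of a compact metric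
space and `Φ = {log φ_n}` a subadditive potential with bounded distortion. If `η` is a
weakly mixing equilibrium state of `Φ` with the lower subadditive Gibbs property, then
`η` has the K-property. -/
theorem hasKProperty_of_weaklyMixing_lowerGibbs
    {X : Type*} [MetricSpace X] [CompactSpace X] [MeasurableSpace X] [BorelSpace X]
    (f finv : X → X) (hf : Continuous f) (hfinv : Continuous finv)
    (hleft : Function.LeftInverse finv f) (hright : Function.RightInverse finv f)
    (hexp : IsExpansive dist f finv)
    (φ : ℕ → X → ℝ) (hφ : IsSubadditivePotential f φ)
    (hbd : HasBoundedDistortion dist f φ)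
    (η : Measure X) (hEq : IsEqState dist f φ η) (hwm : IsWeaklyMixing η f)
    (hGibbs : HasLowerGibbs dist f φ η) :
    HasKProperty η f finv := by
  obtain ⟨e, he, hex⟩ := hexp
  have hprob := hEq.1
  have hs : ExpSys f finv η e := ⟨hf, hfinv, hleft, hright, hex, hEq.2.1⟩
  obtain ⟨c, hc⟩ := exists_partition_entropy_le he hf hφ hbd hEq hGibbs
  obtain ⟨N, ξ, hξ, hCB, -⟩ := hc 1 le_rfl
  have hle := futureAlg_le hs hξ
  have hmap : futureAlg f ξ ≤ (futureAlg f ξ).map f := futureAlg_le_map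
  have htl : tailAlg finv (futureAlg f ξ) ≤ _ := (tailAlg_le _).trans hle
  refine ⟨futureAlg f ξ, hle, hmap, iSup_futureAlg hs hξ hCB, fun A hA =>
    trivial_of_bounded (T := tailAlg finv (futureAlg f ξ)) (c := c) hwm htl
      (fun B hB => tailAlg_preimage hleft hright hmap hB) (fun ι _ W hWt => ?_) hA⟩
  have hW := hWt.mono htl
  refine le_of_forall_pos_le_add fun δ hδ => ?_
  obtain ⟨M, hM⟩ := hs.cH_fine hW hδ
  obtain ⟨N', α, hα, hCBα, hαc⟩ := hc (2 * M + 1) (by omega)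
  -- `α` almost determines `W ∘ f^[M]`, which sits in the middle of the time window `0, …, 2 * M`
  have hWMt : FM (tailAlg finv (futureAlg f ξ)) (W ∘ f^[M]) := fun s =>
    tailAlg_preimage_iterate hleft hright hmap M (hWt s)
  have hWM := hWMt.mono htl
  have h1 : cH η (W ∘ f^[M]) α ≤ δ := by
    have e1 : α = (α ∘ finv^[M]) ∘ f^[M] := by
      funext x; simp only [Function.comp_apply, hs.iter_left]
    rw [e1, cH_comp (hs.mp.iterate M) hW (hα.comp (hs.mfinv.iterate M))]
    exact hM _ inferInstance _ (hα.comp (hs.mfinv.iterate M)) (hs.fine hCBα le_rfl (by omega))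
  -- `α` keeps entropy at least `(2 * M + 1) * h(f)` given `W ∘ f^[M]`, out of at most
  -- `(2 * M + 1) * h(f) + c`: their mutual information is at most `c`
  have h2 := hs.mul_entropyKS_le hWM
    (fun δ' hδ' => hs.zero_entropy hξ hCB hWM (fun k _ h => hs.tail_approx hξ hWMt k h) hδ')
    (n := 2 * M + 1) (by omega) hα hCBα
  have h3 : partInfo η (pr (W ∘ f^[M]) α) = partInfo η (pr α (W ∘ f^[M])) :=
    partInfo_congr (hWM.pr hα) (hα.pr hWM) fun x y => by
      simp only [pr, Prod.mk.injEq]; exact and_comm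
  have h4 := partInfo_comp (hs.mp.iterate M) hW
  unfold cH at h1 h2
  linarith

end SubEq
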